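/- Let d ≥ 1 and let 𝒬 be a finite set of dyadic cubes in ℝ^d such that every dyadic cube P ⊆ ⋃_{Q∈𝒬} Q that contains some member of 𝒬 itself belongs to 𝒬. Let Ω ⊆ ℝ^d be an open set with ⋃_{Q∈𝒬} interior(Q) ⊆ Ω, and let f ∈ L¹(Ω). Define M_𝒬 f(x) = max { f(x), max{ f_Q : Q ∈ 𝒬, x ∈ Q } }. Then there is a constant C depending only on d such that var_Ω (M_𝒬 f) ≤ C · var_Ω f. -/

import Mathlib

open MeasureTheory Metric Set Filter
open scoped ENNReal Topology

noncomputable section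

/-- `ℝ^d` as Euclidean space. -/
abbrev Ed (d : ℕ) := EuclideanSpace ℝ (Fin d)

/-- A dyadic cube `∏_i [2^n m_i, 2^n (m_i + 1))`. -/
def IsDyadicCube {d : ℕ} (Q : Set (Ed d)) : Prop :=
  ∃ (n : ℤ) (m : Fin d → ℤ),
    Q = {x : Ed d | ∀ i, x i ∈ Set.Ico ((2:ℝ)^n * m i) ((2:ℝ)^n * (m i + 1))}

/-- Divergence of a vector field `φ : ℝ^d → ℝ^d`. -/
def divergence {d : ℕ} (φ : Ed d → Ed d) (x : Ed d) : ℝ :=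
  ∑ i, fderiv ℝ φ x (EuclideanSpace.single i 1) i

/-- The variation of `f` in `Ω`. -/
def var {d : ℕ} (Ω : Set (Ed d)) (f : Ed d → ℝ) : ℝ≥0∞ :=
  ⨆ φ ∈ {φ : Ed d → Ed d | ContDiff ℝ 1 φ ∧ HasCompactSupport φ ∧ tsupport φ ⊆ Ω ∧
      ∀ x, ‖φ x‖ ≤ 1},
    ENNReal.ofReal (∫ x in Ω, f x * divergence φ x)

/-- The maximal function associated to a finite family `𝒬` of dyadic cubes:
`M_𝒬 f(x) = max { f(x), ⨍_Q f : Q ∈ 𝒬, x ∈ Q }`. -/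
def finMaxFun {d : ℕ} (𝒬 : Finset (Set (Ed d))) (f : Ed d → ℝ) (x : Ed d) : ℝ :=
  sSup ({f x} ∪ {y : ℝ | ∃ Q ∈ 𝒬, x ∈ Q ∧ y = ⨍ z in Q, f z})

/-!
Fix a scale `2 ^ (-s)` so fine that the cubes of `𝒬` are unions of grid cells, and replace `f` by
its averages over cells. This does not change the averages over cubes of `𝒬`, so it changes
`M_𝒬 f` at a point by at most the change of `f` there, which is small in `L¹` on compact sets. For
a step function the variation is at most the face area times the sum of its jumps over edges of
the grid. Conversely, the jump of the cell averages over a face, times its area, is a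
limit of pairings of `f` with divergences of fields supported in the union of the two adjacent
cells. For a fixed direction and parity of the first cell these unions are disjoint, so the jumps
cost at most `2 d` times the variation of `f`.

It remains to bound the jumps of the maximal function `M` of a grid function `F` by those of `F`.
Integrate over the levels `μ` (coarea): `{M > μ}` is the union of `{F > μ}` and the maximal cubes
`Q ∈ 𝒬` with `F_Q > μ`. If `{F > μ}` fills a fixed proportion of `Q`, the trace and isoperimetric
inequalities pay for the boundary of `Q` by the boundary of `{F > μ}` inside `Q`. If it does not,
then `(F_Q - μ) |Q|` is controlled by the excess over `F_Q` of the averages of the maximal dense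
subcubes `P`, those in which `F` exceeds `F_Q` and the midpoint of `F_P` and `F_Q` on a fixed
proportion. Each level above `F_Q` in this excess is paid for in a stopping cube `S` with
`P ⊆ S ⊊ Q`: the superlevel set fills at most half of `S`, so its size there is at most its boundary
inside `S` times the side of `S`, up to a constant. Summed over all `Q ⊋ S`, the factors
`side S / side Q` form a geometric series.
-/

namespace DyadicVariation

/-! ### Dyadic cubes of grid cells -/

section Discrete

lemma sum_piFinset_sum_update {ι : Type*} [Fintype ι] [DecidableEq ι] {α : ι → Type*} {M : Type*}
    [AddCommMonoid M] (s : ∀ i, Finset (α i)) (i : ι) (g : (∀ i, α i) → M) :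
    ∑ w ∈ Fintype.piFinset s, ∑ t ∈ s i, g (Function.update w i t) =
      (s i).card • ∑ w ∈ Fintype.piFinset s, g w := by
  have hmem : ∀ p ∈ Fintype.piFinset s ×ˢ s i,
      (Function.update p.1 i p.2, p.1 i) ∈ Fintype.piFinset s ×ˢ s i := by
    rintro ⟨w, t⟩ hp
    simp only [Finset.mem_product, Fintype.mem_piFinset] at hp ⊢
    refine ⟨fun j => ?_, hp.1 i⟩
    obtain rfl | hj := eq_or_ne j i
    · simpa using hp.2
    · simpa [hj] using hp.1 j
  have hinv : ∀ p : (∀ i, α i) × α i,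
      (Function.update (Function.update p.1 i p.2) i (p.1 i), Function.update p.1 i p.2 i) = p := by
    simp
  calc ∑ w ∈ Fintype.piFinset s, ∑ t ∈ s i, g (Function.update w i t)
      = ∑ p ∈ Fintype.piFinset s ×ˢ s i, g (Function.update p.1 i p.2) := by
        rw [Finset.sum_product]
    _ = ∑ p ∈ Fintype.piFinset s ×ˢ s i, g p.1 :=
        Finset.sum_nbij' _ _ hmem hmem (fun p _ => hinv p) (fun p _ => hinv p) fun _ _ => rfl
    _ = (s i).card • ∑ w ∈ Fintype.piFinset s, g w := by
        rw [Finset.sum_product, Finset.smul_sum]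
        simp only [Finset.sum_const]

lemma sum_piFinset_product_piecewise {ι : Type*} [Fintype ι] [DecidableEq ι] {α : ι → Type*}
    {M : Type*} [AddCommMonoid M] (s : ∀ i, Finset (α i)) (A : Finset ι)
    (g : (∀ i, α i) × (∀ i, α i) → M) :
    ∑ p ∈ Fintype.piFinset s ×ˢ Fintype.piFinset s,
        g (A.piecewise p.2 p.1, A.piecewise p.1 p.2) =
      ∑ p ∈ Fintype.piFinset s ×ˢ Fintype.piFinset s, g p := by
  have hmem : ∀ p ∈ Fintype.piFinset s ×ˢ Fintype.piFinset s,
      (A.piecewise p.2 p.1, A.piecewise p.1 p.2) ∈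
        Fintype.piFinset s ×ˢ Fintype.piFinset s := by
    rintro ⟨x, z⟩ hp
    simp only [Finset.mem_product, Fintype.mem_piFinset] at hp ⊢
    constructor <;> intro i <;> by_cases hi : i ∈ A <;> simp [hi, hp.1 i, hp.2 i]
  have hinv : ∀ p : (∀ i, α i) × (∀ i, α i),
      (A.piecewise (A.piecewise p.1 p.2) (A.piecewise p.2 p.1),
        A.piecewise (A.piecewise p.2 p.1) (A.piecewise p.1 p.2)) = p := by
    rintro ⟨x, z⟩
    ext i <;> by_cases hi : i ∈ A <;> simp [hi]
  exact Finset.sum_nbij' _ _ hmem hmem (fun p _ => hinv p) (fun p _ => hinv p) fun _ _ => rfl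

lemma dist_le_sum_Ico_dist {α : Type*} [PseudoMetricSpace α] (u : ℤ → α) {a b : ℤ}
    (hab : a ≤ b) : dist (u a) (u b) ≤ ∑ r ∈ Finset.Ico a b, dist (u r) (u (r + 1)) := by
  induction b, hab using Int.leInduction with
  | base => simp
  | succ b hb ih =>
    rw [← Finset.insert_Ico_right_eq_Ico_add_one hb, Finset.sum_insert (by simp)]
    linarith [dist_triangle (u a) (u b) (u (b + 1))]

variable {d : ℕ}

/-- A cell of the grid on `ℝ^d`, given by the integer coordinates of its lowest corner. -/
abbrev Cell (d : ℕ) := Fin d → ℤ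

/-- A dyadic cube of side `2 ^ scale`, measured in cells; it consists of the cells `x` with
`⌊x i / 2 ^ scale⌋ = index i` for every `i`. -/
@[ext]
structure GridCube (d : ℕ) where
  /-- The binary logarithm of the side. -/
  scale : ℕ
  /-- The position among the cubes of the same scale. -/
  index : Cell d

/-- The dyadic cube of side `2 ^ k` that contains `x`. -/
def ancestor (k : ℕ) (x : Cell d) : GridCube d := ⟨k, fun i => x i / 2 ^ k⟩

lemma ancestor_index_ancestor_index (j k : ℕ) (x : Cell d) :
    (ancestor j (ancestor k x).index).index = (ancestor (k + j) x).index := by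
  ext i
  simp only [ancestor, pow_add]
  rw [Int.ediv_ediv_of_nonneg (by positivity)]

namespace GridCube

/-- The projection of a cube to the `i`-th coordinate axis. -/
def interval (Q : GridCube d) (i : Fin d) : Finset ℤ :=
  Finset.Ico (2 ^ Q.scale * Q.index i) (2 ^ Q.scale * (Q.index i + 1))

/-- The cells of a dyadic cube. -/
def cells (Q : GridCube d) : Finset (Cell d) := Fintype.piFinset Q.interval

variable {P Q : GridCube d} {w x : Cell d}

lemma mem_interval {i : Fin d} {t : ℤ} :
    t ∈ Q.interval i ↔ 2 ^ Q.scale * Q.index i ≤ t ∧ t < 2 ^ Q.scale * (Q.index i + 1) :=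
  Finset.mem_Ico

lemma card_interval (Q : GridCube d) (i : Fin d) : (Q.interval i).card = 2 ^ Q.scale := by
  have : 2 ^ Q.scale * (Q.index i + 1) - 2 ^ Q.scale * Q.index i = ((2 ^ Q.scale : ℕ) : ℤ) := by
    push_cast; ring
  rw [interval, Int.card_Ico, this, Int.toNat_natCast]

lemma mem_cells : x ∈ Q.cells ↔ ∀ i, x i ∈ Q.interval i := Fintype.mem_piFinset

lemma card_cells (Q : GridCube d) : (Q.cells.card : ℝ) = (2 ^ Q.scale) ^ d := by
  simp [cells, card_interval]

lemma card_cells_pos (Q : GridCube d) : 0 < (Q.cells.card : ℝ) := by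
  rw [card_cells]; positivity

lemma cells_nonempty (Q : GridCube d) : Q.cells.Nonempty :=
  Finset.card_pos.1 (by exact_mod_cast Q.card_cells_pos)

lemma mem_cells_iff_ancestor_eq : x ∈ Q.cells ↔ ancestor Q.scale x = Q := by
  have h : (0 : ℤ) < 2 ^ Q.scale := by positivity
  rw [mem_cells, GridCube.ext_iff, funext_iff]
  simp only [ancestor, true_and]
  refine forall_congr' fun i => ?_
  rw [mem_interval, le_antisymm_iff, ← Int.lt_add_one_iff (a := x i / _),
    Int.ediv_lt_iff_lt_mul h, Int.le_ediv_iff_mul_le h, mul_comm (Q.index i),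
    mul_comm (Q.index i + 1), and_comm]

lemma mem_cells_ancestor (k : ℕ) (x : Cell d) : x ∈ (ancestor k x).cells :=
  mem_cells_iff_ancestor_eq.2 rfl

lemma cells_zero (x : Cell d) : (⟨0, x⟩ : GridCube d).cells = {x} := by
  ext y
  simp [mem_cells_iff_ancestor_eq, GridCube.ext_iff, ancestor]

lemma eq_of_mem_cells (hP : x ∈ P.cells) (hQ : x ∈ Q.cells) (h : P.scale = Q.scale) : P = Q := by
  rw [← mem_cells_iff_ancestor_eq.1 hP, ← mem_cells_iff_ancestor_eq.1 hQ, h]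

/-- Inclusion of cubes. The scales are compared separately because in dimension zero every cube
consists of the same single cell. -/
instance : PartialOrder (GridCube d) where
  le P Q := P.scale ≤ Q.scale ∧ P.cells ⊆ Q.cells
  le_refl _ := ⟨le_rfl, subset_rfl⟩
  le_trans _ _ _ h h' := ⟨h.1.trans h'.1, h.2.trans h'.2⟩
  le_antisymm P _ h h' :=
    have ⟨_, hx⟩ := P.cells_nonempty
    eq_of_mem_cells hx (h.2 hx) (h.1.antisymm h'.1)

lemma cells_subset_of_le (h : P ≤ Q) : P.cells ⊆ Q.cells := h.2

lemma le_of_mem_cells (hP : x ∈ P.cells) (hQ : x ∈ Q.cells) (h : P.scale ≤ Q.scale) : P ≤ Q := by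
  refine ⟨h, fun y hy => ?_⟩
  rw [mem_cells_iff_ancestor_eq] at *
  obtain ⟨j, hj⟩ := Nat.exists_eq_add_of_le h
  have index_eq : ∀ z : Cell d, (ancestor Q.scale z).index =
      (ancestor j (ancestor P.scale z).index).index := fun z => by
    rw [ancestor_index_ancestor_index, hj]
  refine GridCube.ext rfl ?_
  calc (ancestor Q.scale y).index = (ancestor Q.scale x).index := by
        rw [index_eq y, hy, ← hP, ← index_eq x]
    _ = Q.index := by rw [hQ]

lemma le_or_ge_of_mem_cells (hP : x ∈ P.cells) (hQ : x ∈ Q.cells) : P ≤ Q ∨ Q ≤ P :=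
  (le_total P.scale Q.scale).imp (le_of_mem_cells hP hQ) (le_of_mem_cells hQ hP)

lemma scale_lt_scale (h : P < Q) : P.scale < Q.scale := by
  obtain ⟨x, hx⟩ := P.cells_nonempty
  refine h.le.1.lt_of_ne fun hs => h.ne ?_
  exact eq_of_mem_cells hx (cells_subset_of_le h.le hx) hs

open scoped Classical in
instance : LocallyFiniteOrderBot (GridCube d) :=
  LocallyFiniteOrderBot.ofIic _
    (fun Q => (Finset.range (Q.scale + 1)).biUnion fun j => Q.cells.image (ancestor j)) <| by
    intro Q P
    simp only [Finset.mem_biUnion, Finset.mem_range, Finset.mem_image, Nat.lt_succ_iff]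
    constructor
    · rintro ⟨j, hj, x, hx, rfl⟩
      exact le_of_mem_cells (mem_cells_ancestor j x) hx hj
    · intro h
      obtain ⟨x, hx⟩ := P.cells_nonempty
      exact ⟨P.scale, h.1, x, h.2 hx, mem_cells_iff_ancestor_eq.1 hx⟩

lemma pairwiseDisjoint_cells {𝒞 : Set (GridCube d)} (h𝒞 : IsAntichain (· ≤ ·) 𝒞) :
    𝒞.PairwiseDisjoint cells := by
  intro P hP Q hQ hPQ
  refine Finset.disjoint_left.2 fun x hxP hxQ => ?_
  exact (le_or_ge_of_mem_cells hxP hxQ).elim (h𝒞 hP hQ hPQ) (h𝒞 hQ hP hPQ.symm)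

lemma update_mem_cells (hw : w ∈ Q.cells) (i : Fin d) {t : ℤ} :
    Function.update w i t ∈ Q.cells ↔ t ∈ Q.interval i := by
  rw [mem_cells] at *
  refine ⟨fun h => by simpa using h i, fun h j => ?_⟩
  obtain rfl | hj := eq_or_ne j i
  · simpa using h
  · simpa [hj] using hw j

end GridCube

/-! ### Variation on the edges of the grid -/

/-- An edge of the grid: a cell together with the direction of the other endpoint. -/
abbrev Edge (d : ℕ) := Cell d × Fin d

/-- The neighbour of `x` in the positive `i`-th direction. -/
def shift (x : Cell d) (i : Fin d) : Cell d := Function.update x i (x i + 1)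

lemma shift_injective : Function.Injective fun e : Edge d => (shift e.1 e.2, e.2) := by
  have unshift : ∀ (x : Cell d) i, Function.update (shift x i) i (shift x i i - 1) = x := by
    simp [shift]
  rintro ⟨x, i⟩ ⟨y, j⟩ h
  obtain ⟨h, rfl⟩ := Prod.mk.inj h
  rw [← unshift x i, ← unshift y i, h]

/-- The absolute value of the discrete derivative of `h` along an edge. -/
def jump (h : Cell d → ℝ) (e : Edge d) : ℝ := |h (shift e.1 e.2) - h e.1|

lemma jump_nonneg (h : Cell d → ℝ) (e : Edge d) : 0 ≤ jump h e := abs_nonneg _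

/-- The total variation of `h` on a set of edges. -/
def edgeVar (𝓔 : Finset (Edge d)) (h : Cell d → ℝ) : ℝ := ∑ e ∈ 𝓔, jump h e

lemma edgeVar_nonneg (𝓔 : Finset (Edge d)) (h : Cell d → ℝ) : 0 ≤ edgeVar 𝓔 h :=
  Finset.sum_nonneg fun _ _ => jump_nonneg _ _

namespace GridCube

variable {P Q : GridCube d} {w : Cell d} {i : Fin d}

lemma shift_mem_cells (hw : w ∈ Q.cells) :
    shift w i ∈ Q.cells ↔ w i ≠ 2 ^ Q.scale * (Q.index i + 1) - 1 := by
  have := mem_interval.1 (mem_cells.1 hw i)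
  rw [shift, update_mem_cells hw, mem_interval]
  lia

lemma mem_cells_of_shift_mem_cells (hw : shift w i ∈ Q.cells)
    (hi : shift w i i ≠ 2 ^ Q.scale * Q.index i) : w ∈ Q.cells := by
  have hwi := mem_interval.1 (mem_cells.1 hw i)
  have : w = Function.update (shift w i) i (w i) := by simp [shift]
  rw [this, update_mem_cells hw, mem_interval]
  simp only [shift, Function.update_self] at hwi hi
  lia

/-- The edges with both endpoints in a cube. -/
def edges (Q : GridCube d) : Finset (Edge d) :=
  (Q.cells ×ˢ Finset.univ).filter fun e => shift e.1 e.2 ∈ Q.cells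

lemma mem_edges {e : Edge d} : e ∈ Q.edges ↔ e.1 ∈ Q.cells ∧ shift e.1 e.2 ∈ Q.cells := by
  simp [edges]

lemma edges_subset_of_le (h : P ≤ Q) : P.edges ⊆ Q.edges := fun e he => by
  rw [mem_edges] at *
  exact ⟨cells_subset_of_le h he.1, cells_subset_of_le h he.2⟩

lemma sum_edgeVar_edges_le {𝒞 : Finset (GridCube d)}
    (h𝒞 : IsAntichain (· ≤ ·) (𝒞 : Set (GridCube d))) {𝓔 : Finset (Edge d)}
    (h𝓔 : ∀ Q ∈ 𝒞, Q.edges ⊆ 𝓔) (h : Cell d → ℝ) :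
    ∑ Q ∈ 𝒞, edgeVar Q.edges h ≤ edgeVar 𝓔 h := by
  have hdisj : (𝒞 : Set (GridCube d)).PairwiseDisjoint edges := fun P hP Q hQ hPQ =>
    Finset.disjoint_left.2 fun e heP heQ => Finset.disjoint_left.1
      (pairwiseDisjoint_cells h𝒞 hP hQ hPQ) (mem_edges.1 heP).1 (mem_edges.1 heQ).1
  simp only [edgeVar]
  rw [← Finset.sum_biUnion hdisj]
  exact Finset.sum_le_sum_of_subset_of_nonneg (Finset.biUnion_subset.2 h𝓔)
    fun _ _ _ => jump_nonneg _ _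

/-- The jump of `h` along the edge in direction `i` starting at `w`, or zero if this edge leaves
the cube. -/
def innerJump (Q : GridCube d) (h : Cell d → ℝ) (i : Fin d) (w : Cell d) : ℝ :=
  if shift w i ∈ Q.cells then jump h (w, i) else 0

lemma innerJump_nonneg (Q : GridCube d) (h : Cell d → ℝ) (i : Fin d) (w : Cell d) :
    0 ≤ Q.innerJump h i w := by
  unfold innerJump
  split_ifs
  exacts [jump_nonneg _ _, le_rfl]

/-- The contribution of the edges in direction `i` to the variation in a cube. -/
def dirVar (Q : GridCube d) (h : Cell d → ℝ) (i : Fin d) : ℝ := ∑ w ∈ Q.cells, Q.innerJump h i w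

lemma sum_dirVar (Q : GridCube d) (h : Cell d → ℝ) : ∑ i, Q.dirVar h i = edgeVar Q.edges h := by
  rw [edgeVar, edges, Finset.sum_filter, Finset.sum_product, Finset.sum_comm]
  rfl

/-- The total jump of `h` along the line in direction `i` through `w`, inside the cube. -/
def lineVar (Q : GridCube d) (h : Cell d → ℝ) (i : Fin d) (w : Cell d) : ℝ :=
  ∑ t ∈ Q.interval i, Q.innerJump h i (Function.update w i t)

lemma sum_cells_sum_update (Q : GridCube d) (i : Fin d) (g : Cell d → ℝ) :
    ∑ w ∈ Q.cells, ∑ t ∈ Q.interval i, g (Function.update w i t) =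
      2 ^ Q.scale * ∑ w ∈ Q.cells, g w := by
  rw [cells, sum_piFinset_sum_update, card_interval, nsmul_eq_mul, Nat.cast_pow, Nat.cast_ofNat]

lemma sum_lineVar (Q : GridCube d) (h : Cell d → ℝ) (i : Fin d) :
    ∑ w ∈ Q.cells, Q.lineVar h i w = 2 ^ Q.scale * Q.dirVar h i :=
  Q.sum_cells_sum_update i (Q.innerJump h i)

lemma abs_sub_update_le_lineVar (hw : w ∈ Q.cells) (h : Cell d → ℝ) {t : ℤ}
    (ht : t ∈ Q.interval i) : |h w - h (Function.update w i t)| ≤ Q.lineVar h i w := by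
  have hwi := mem_cells.1 hw i
  have segment : ∀ {a b : ℤ}, a ∈ Q.interval i → b ∈ Q.interval i → a ≤ b →
      |h (Function.update w i a) - h (Function.update w i b)| ≤ Q.lineVar h i w := by
    intro a b ha hb hab
    rw [mem_interval] at ha hb
    have hsub : Finset.Ico a b ⊆ Q.interval i := Finset.Ico_subset_Ico ha.1 hb.2.le
    refine (dist_le_sum_Ico_dist (fun r => h (Function.update w i r)) hab).trans ?_
    refine le_trans (Finset.sum_le_sum fun r hr => le_of_eq ?_)
      (Finset.sum_le_sum_of_subset_of_nonneg hsub fun _ _ _ => Q.innerJump_nonneg _ _ _)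
    have hshift : shift (Function.update w i r) i = Function.update w i (r + 1) := by simp [shift]
    have hmem : Function.update w i (r + 1) ∈ Q.cells := by
      rw [update_mem_cells hw, mem_interval]
      rw [Finset.mem_Ico] at hr
      lia
    rw [innerJump, hshift, if_pos hmem, jump, hshift, Real.dist_eq, abs_sub_comm]
  rcases le_total (w i) t with hle | hle
  · simpa using segment hwi ht hle
  · simpa [abs_sub_comm] using segment ht hwi hle

lemma slice_trace_inequality (Q : GridCube d) (h : Cell d → ℝ) {a : ℤ} (ha : a ∈ Q.interval i) :
    ∑ w ∈ Q.cells, (if w i = a then h w else 0) ≤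
      (∑ w ∈ Q.cells, h w) / 2 ^ Q.scale + Q.dirVar h i := by
  refine le_of_mul_le_mul_left ?_ (show (0 : ℝ) < 2 ^ Q.scale by positivity)
  rw [mul_add, mul_div_cancel₀ _ (by positivity), ← sum_cells_sum_update Q i, ← sum_lineVar,
    ← Finset.sum_add_distrib]
  refine Finset.sum_le_sum fun w hw => ?_
  simp only [Function.update_self]
  rw [Finset.sum_ite_eq' _ a, if_pos ha]
  linarith [neg_le_of_abs_le (abs_sub_update_le_lineVar hw h ha)]

/-- Moving from `x` to `z` one coordinate at a time, the two points seen before each move are again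
a uniformly distributed pair of cells, so each move costs a one-dimensional variation. -/
lemma sum_sum_abs_sub_piecewise_le (Q : GridCube d) (h : Cell d → ℝ) (A : Finset (Fin d)) :
    ∑ p ∈ Q.cells ×ˢ Q.cells, |h p.1 - h (A.piecewise p.2 p.1)| ≤
      Q.cells.card * (2 ^ Q.scale * ∑ i ∈ A, Q.dirVar h i) := by
  induction A using Finset.induction_on with
  | empty => simp
  | insert i A hi ih =>
    have step : ∑ p ∈ Q.cells ×ˢ Q.cells,
        |h (A.piecewise p.2 p.1) - h ((insert i A).piecewise p.2 p.1)| ≤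
          Q.cells.card * (2 ^ Q.scale * Q.dirVar h i) := by
      calc _ = ∑ p ∈ Q.cells ×ˢ Q.cells, |h p.1 - h (Function.update p.1 i (p.2 i))| := by
            have := sum_piFinset_product_piecewise Q.interval A
              fun p => |h p.1 - h (Function.update p.1 i (p.2 i))|
            simp only [Finset.piecewise_eq_of_notMem _ _ _ hi] at this
            simp only [Finset.piecewise_insert]
            exact this
        _ ≤ ∑ p ∈ Q.cells ×ˢ Q.cells, Q.lineVar h i p.1 := by
            refine Finset.sum_le_sum fun p hp => ?_
            rw [Finset.mem_product] at hp
            exact abs_sub_update_le_lineVar hp.1 h (mem_cells.1 hp.2 i)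
        _ = _ := by
            rw [Finset.sum_product_right]
            simp only [Finset.sum_const, nsmul_eq_mul, sum_lineVar]
    rw [Finset.sum_insert hi]
    calc _ ≤ ∑ p ∈ Q.cells ×ˢ Q.cells, (|h (A.piecewise p.2 p.1) -
            h ((insert i A).piecewise p.2 p.1)| + |h p.1 - h (A.piecewise p.2 p.1)|) :=
          Finset.sum_le_sum fun p _ => (abs_sub_le _ _ _).trans (add_comm _ _).le
      _ ≤ _ := by
          rw [Finset.sum_add_distrib]
          linarith

lemma poincare_inequality (Q : GridCube d) (h : Cell d → ℝ) :
    ∑ p ∈ Q.cells ×ˢ Q.cells, |h p.1 - h p.2| ≤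
      Q.cells.card * (2 ^ Q.scale * edgeVar Q.edges h) := by
  simpa [sum_dirVar] using Q.sum_sum_abs_sub_piecewise_le h Finset.univ

end GridCube

/-! ### Superlevel sets -/

/-- The indicator function of the superlevel set `{F > μ}`. -/
def level (F : Cell d → ℝ) (μ : ℝ) (x : Cell d) : ℝ := if μ < F x then 1 else 0

lemma level_of_lt {F : Cell d → ℝ} {μ : ℝ} {x : Cell d} (h : μ < F x) : level F μ x = 1 :=
  if_pos h

lemma level_of_not_lt {F : Cell d → ℝ} {μ : ℝ} {x : Cell d} (h : ¬ μ < F x) : level F μ x = 0 :=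
  if_neg h

lemma level_nonneg (F : Cell d → ℝ) (μ : ℝ) (x : Cell d) : 0 ≤ level F μ x := by
  unfold level; split_ifs <;> norm_num

lemma level_le_one (F : Cell d → ℝ) (μ : ℝ) (x : Cell d) : level F μ x ≤ 1 := by
  unfold level; split_ifs <;> norm_num

lemma level_antitone (F : Cell d → ℝ) (x : Cell d) : Antitone fun μ => level F μ x := by
  intro μ ν h
  simp only [level]
  split_ifs with hν hμ
  exacts [le_rfl, absurd (h.trans_lt hν) hμ, zero_le_one, le_rfl]

lemma edgeVar_one_sub (𝓔 : Finset (Edge d)) (h : Cell d → ℝ) :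
    edgeVar 𝓔 (1 - h) = edgeVar 𝓔 h := by
  refine Finset.sum_congr rfl fun e _ => ?_
  rw [jump, jump, abs_sub_comm, Pi.sub_apply, Pi.sub_apply, Pi.one_apply, Pi.one_apply,
    sub_sub_sub_cancel_left]

namespace GridCube

variable {P Q : GridCube d} {F : Cell d → ℝ} {μ c : ℝ}

/-- The number of cells of a cube which lie in the superlevel set `{F > μ}`. -/
def count (Q : GridCube d) (F : Cell d → ℝ) (μ : ℝ) : ℝ := ∑ x ∈ Q.cells, level F μ x

/-- The average of `F` over a cube. -/
def avg (Q : GridCube d) (F : Cell d → ℝ) : ℝ := (∑ x ∈ Q.cells, F x) / Q.cells.card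

lemma card_mul_avg (Q : GridCube d) (F : Cell d → ℝ) :
    Q.cells.card * Q.avg F = ∑ x ∈ Q.cells, F x :=
  mul_div_cancel₀ _ Q.card_cells_pos.ne'

lemma count_nonneg (Q : GridCube d) (F : Cell d → ℝ) (μ : ℝ) : 0 ≤ Q.count F μ :=
  Finset.sum_nonneg fun _ _ => level_nonneg _ _ _

lemma sum_one_sub_level (Q : GridCube d) (F : Cell d → ℝ) (μ : ℝ) :
    ∑ x ∈ Q.cells, (1 - level F μ x) = Q.cells.card - Q.count F μ := by
  simp [Finset.sum_sub_distrib, count]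

lemma count_le_card (Q : GridCube d) (F : Cell d → ℝ) (μ : ℝ) : Q.count F μ ≤ Q.cells.card := by
  rw [← sub_nonneg, ← sum_one_sub_level]
  exact Finset.sum_nonneg fun x _ => sub_nonneg.2 (level_le_one F μ x)

lemma count_antitone (Q : GridCube d) (F : Cell d → ℝ) : Antitone (Q.count F) :=
  fun _ _ h => Finset.sum_le_sum fun x _ => level_antitone F x h

lemma count_le_count (F : Cell d → ℝ) (μ : ℝ) (h : P ≤ Q) : P.count F μ ≤ Q.count F μ :=
  Finset.sum_le_sum_of_subset_of_nonneg (cells_subset_of_le h) fun _ _ _ => level_nonneg _ _ _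

open scoped Classical in
lemma sum_count_le_sum_count {𝒞 𝒟 : Finset (GridCube d)}
    (h𝒞 : IsAntichain (· ≤ ·) (𝒞 : Set (GridCube d)))
    (h𝒟 : IsAntichain (· ≤ ·) (𝒟 : Set (GridCube d)))
    (h : ∀ P ∈ 𝒞, ∃ Q ∈ 𝒟, P ≤ Q) (F : Cell d → ℝ) (μ : ℝ) :
    ∑ P ∈ 𝒞, P.count F μ ≤ ∑ Q ∈ 𝒟, Q.count F μ := by
  have hsub : 𝒞.biUnion cells ⊆ 𝒟.biUnion cells := Finset.biUnion_subset.2 fun P hP =>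
    have ⟨Q, hQ, hPQ⟩ := h P hP
    (cells_subset_of_le hPQ).trans (Finset.subset_biUnion_of_mem cells hQ)
  simp only [count]
  rw [← Finset.sum_biUnion (pairwiseDisjoint_cells h𝒞),
    ← Finset.sum_biUnion (pairwiseDisjoint_cells h𝒟)]
  exact Finset.sum_le_sum_of_subset_of_nonneg hsub fun _ _ _ => level_nonneg _ _ _

lemma isoperimetric_inequality (Q : GridCube d) (F : Cell d → ℝ) (μ : ℝ) :
    Q.count F μ * (Q.cells.card - Q.count F μ) ≤
      Q.cells.card * (2 ^ Q.scale * edgeVar Q.edges (level F μ)) := by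
  refine le_trans ?_ (Q.poincare_inequality (level F μ))
  rw [← sum_one_sub_level, count, Finset.sum_mul_sum, ← Finset.sum_product']
  refine Finset.sum_le_sum fun p _ => ?_
  unfold level
  split_ifs <;> norm_num

lemma count_le_of_two_mul_count_le (h : 2 * Q.count F μ ≤ Q.cells.card) :
    Q.count F μ ≤ 2 * (2 ^ Q.scale * edgeVar Q.edges (level F μ)) := by
  refine le_of_mul_le_mul_left ?_ Q.card_cells_pos
  nlinarith [Q.isoperimetric_inequality F μ, Q.count_nonneg F μ]

lemma mul_card_sub_count_le (h : c * Q.cells.card ≤ Q.count F μ) :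
    c * (Q.cells.card - Q.count F μ) ≤ 2 ^ Q.scale * edgeVar Q.edges (level F μ) := by
  refine le_of_mul_le_mul_left ?_ Q.card_cells_pos
  nlinarith [Q.isoperimetric_inequality F μ, Q.count_le_card F μ]

lemma card_sub_count_div_le (Q : GridCube d) (F : Cell d → ℝ) (μ : ℝ) (hc : 0 < c) :
    (Q.cells.card - Q.count F μ) / 2 ^ Q.scale ≤ c⁻¹ * edgeVar Q.edges (level F μ) +
      if Q.count F μ < c * Q.cells.card then (Q.cells.card : ℝ) / 2 ^ Q.scale else 0 := by
  split_ifs with h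
  · have hE : 0 ≤ c⁻¹ * edgeVar Q.edges (level F μ) :=
      mul_nonneg (inv_nonneg.2 hc.le) (edgeVar_nonneg _ _)
    refine le_add_of_nonneg_of_le hE ?_
    gcongr
    linarith [Q.count_nonneg F μ]
  · rw [add_zero, div_le_iff₀ (by positivity), mul_assoc, ← div_eq_inv_mul, le_div_iff₀' hc,
      mul_comm (edgeVar _ _)]
    exact mul_card_sub_count_le (not_lt.1 h)

/-- The value of `h` at `x` if the step from `x` to `y` leaves the cube, and zero otherwise. -/
def exitValue (Q : GridCube d) (h : Cell d → ℝ) (x y : Cell d) : ℝ :=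
  if x ∈ Q.cells ∧ y ∉ Q.cells then h x else 0

lemma exitValue_nonneg (Q : GridCube d) {h : Cell d → ℝ} (hh : 0 ≤ h) (x y : Cell d) :
    0 ≤ Q.exitValue h x y := by
  unfold exitValue
  split_ifs
  exacts [hh x, le_rfl]

lemma slices_trace_inequality (Q : GridCube d) (h : Cell d → ℝ) {a : Cell d} (ha : a ∈ Q.cells) :
    ∑ e ∈ (Q.cells ×ˢ Finset.univ).filter fun e : Edge d => e.1 e.2 = a e.2, h e.1 ≤
      d * ((∑ w ∈ Q.cells, h w) / 2 ^ Q.scale) + edgeVar Q.edges h := by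
  rw [Finset.sum_filter, Finset.sum_product_right]
  refine (Finset.sum_le_sum fun i _ => Q.slice_trace_inequality h (mem_cells.1 ha i)).trans_eq ?_
  rw [Finset.sum_add_distrib, sum_dirVar, Finset.sum_const, Finset.card_univ, Fintype.card_fin,
    nsmul_eq_mul]

lemma sum_exitValue_shift_le (Q : GridCube d) {h : Cell d → ℝ} (hh : 0 ≤ h)
    (𝓔 : Finset (Edge d)) :
    ∑ e ∈ 𝓔, Q.exitValue h e.1 (shift e.1 e.2) ≤
      d * ((∑ w ∈ Q.cells, h w) / 2 ^ Q.scale) + edgeVar Q.edges h := by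
  have htop : (fun i => 2 ^ Q.scale * (Q.index i + 1) - 1) ∈ Q.cells := by
    have : (0 : ℤ) < 2 ^ Q.scale := by positivity
    exact mem_cells.2 fun i => mem_interval.2 ⟨by lia, by lia⟩
  refine le_trans ?_ (Q.slices_trace_inequality h htop)
  simp only [exitValue]
  rw [← Finset.sum_filter]
  refine Finset.sum_le_sum_of_subset_of_nonneg (fun e he => ?_) fun e _ _ => hh e.1
  obtain ⟨-, hmem, hnmem⟩ := Finset.mem_filter.1 he
  rw [shift_mem_cells hmem, not_not] at hnmem
  simpa using ⟨hmem, hnmem⟩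

lemma sum_shift_exitValue_le (Q : GridCube d) {h : Cell d → ℝ} (hh : 0 ≤ h)
    (𝓔 : Finset (Edge d)) :
    ∑ e ∈ 𝓔, Q.exitValue h (shift e.1 e.2) e.1 ≤
      d * ((∑ w ∈ Q.cells, h w) / 2 ^ Q.scale) + edgeVar Q.edges h := by
  have hbot : (fun i => 2 ^ Q.scale * Q.index i) ∈ Q.cells := by
    have : (0 : ℤ) < 2 ^ Q.scale := by positivity
    exact mem_cells.2 fun i => mem_interval.2 ⟨le_rfl, by lia⟩
  refine le_trans ?_ (Q.slices_trace_inequality h hbot)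
  simp only [exitValue]
  rw [← Finset.sum_filter, ← Finset.sum_image (f := fun e : Edge d => h e.1)
    (g := fun e : Edge d => (shift e.1 e.2, e.2)) shift_injective.injOn]
  refine Finset.sum_le_sum_of_subset_of_nonneg (Finset.image_subset_iff.2 fun e he => ?_)
    fun e _ _ => hh e.1
  obtain ⟨-, hmem, hnmem⟩ := Finset.mem_filter.1 he
  have := mt (mem_cells_of_shift_mem_cells hmem) hnmem
  simpa [hmem] using this

end GridCube

/-! ### The maximal function at a fixed level -/

variable {𝒬 : Finset (GridCube d)} {F M : Cell d → ℝ} {μ : ℝ} {Q : GridCube d}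

/-- `M` is the maximum of `F` and the averages over the cubes in `𝒬`, expressed through
superlevel sets. -/
def IsMaxFun (𝒬 : Finset (GridCube d)) (F M : Cell d → ℝ) : Prop :=
  ∀ x μ, μ < M x ↔ μ < F x ∨ ∃ Q ∈ 𝒬, x ∈ Q.cells ∧ μ < Q.avg F

open scoped Classical in
/-- The maximal cubes of `𝒬` with average above `μ`. -/
def topCubes (𝒬 : Finset (GridCube d)) (F : Cell d → ℝ) (μ : ℝ) : Finset (GridCube d) :=
  𝒬.filter (Maximal fun T => T ∈ 𝒬 ∧ μ < T.avg F)

lemma mem_topCubes : Q ∈ topCubes 𝒬 F μ ↔ Maximal (fun T => T ∈ 𝒬 ∧ μ < T.avg F) Q := by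
  classical
  rw [topCubes, Finset.mem_filter, and_iff_right_of_imp fun h => h.prop.1]

lemma isAntichain_topCubes : IsAntichain (· ≤ ·) (topCubes 𝒬 F μ : Set (GridCube d)) :=
  (setOfPred_maximal_antichain _).subset fun _ hQ => mem_topCubes.1 hQ

lemma exists_mem_topCubes (hQ : Q ∈ 𝒬) (hμ : μ < Q.avg F) : ∃ P ∈ topCubes 𝒬 F μ, Q ≤ P := by
  have hfin : {T | T ∈ 𝒬 ∧ μ < T.avg F}.Finite := 𝒬.finite_toSet.subset fun _ hT => hT.1
  obtain ⟨P, hQP, hP⟩ := hfin.exists_le_maximal (a := Q) ⟨hQ, hμ⟩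
  exact ⟨P, mem_topCubes.2 hP, hQP⟩

lemma one_sub_level_nonneg (F : Cell d → ℝ) (μ : ℝ) : 0 ≤ 1 - level F μ :=
  fun x => sub_nonneg.2 (level_le_one F μ x)

lemma abs_level_sub_le_of_lt (hM : IsMaxFun 𝒬 F M) {x y : Cell d} (hx : μ < M x)
    (hy : ¬ μ < M y) :
    |level M μ x - level M μ y| ≤ |level F μ x - level F μ y| +
      ∑ Q ∈ topCubes 𝒬 F μ, Q.exitValue (1 - level F μ) x y := by
  have exit_nonneg (Q : GridCube d) := Q.exitValue_nonneg (one_sub_level_nonneg F μ) x y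
  have hFy : ¬ μ < F y := fun h => hy ((hM y μ).2 (Or.inl h))
  rw [level_of_lt hx, level_of_not_lt hy, level_of_not_lt hFy, sub_zero, sub_zero, abs_one]
  obtain hFx | ⟨Q, hQ, hxQ, hQμ⟩ := (hM x μ).1 hx
  · rw [level_of_lt hFx, abs_one]
    exact le_add_of_nonneg_right (Finset.sum_nonneg fun Q _ => exit_nonneg Q)
  · obtain ⟨P, hP, hQP⟩ := exists_mem_topCubes hQ hQμ
    obtain ⟨hP𝒬, hPμ⟩ := (mem_topCubes.1 hP).prop
    have hyP : y ∉ P.cells := fun h => hy ((hM y μ).2 (Or.inr ⟨P, hP𝒬, h, hPμ⟩))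
    have hsum := Finset.single_le_sum (fun Q _ => exit_nonneg Q) hP
    rw [GridCube.exitValue, if_pos ⟨GridCube.cells_subset_of_le hQP hxQ, hyP⟩] at hsum
    rw [abs_of_nonneg (level_nonneg F μ x)]
    simp only [Pi.sub_apply, Pi.one_apply] at hsum
    linarith

lemma jump_level_le (hM : IsMaxFun 𝒬 F M) (μ : ℝ) (e : Edge d) :
    jump (level M μ) e ≤ jump (level F μ) e + ∑ Q ∈ topCubes 𝒬 F μ,
      (Q.exitValue (1 - level F μ) e.1 (shift e.1 e.2) +
        Q.exitValue (1 - level F μ) (shift e.1 e.2) e.1) := by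
  rw [Finset.sum_add_distrib, jump, jump]
  generalize shift e.1 e.2 = y
  have sum_nonneg (x y : Cell d) : 0 ≤ ∑ Q ∈ topCubes 𝒬 F μ, Q.exitValue (1 - level F μ) x y :=
    Finset.sum_nonneg fun Q _ => Q.exitValue_nonneg (one_sub_level_nonneg F μ) x y
  have hxy := sum_nonneg e.1 y
  have hyx := sum_nonneg y e.1
  by_cases hx : μ < M e.1 <;> by_cases hy : μ < M y
  · rw [level_of_lt hx, level_of_lt hy, sub_self, abs_zero]
    positivity
  · have := abs_level_sub_le_of_lt hM hx hy
    rw [abs_sub_comm, abs_sub_comm (level F μ y)]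
    linarith
  · linarith [abs_level_sub_le_of_lt hM hy hx]
  · rw [level_of_not_lt hx, level_of_not_lt hy, sub_self, abs_zero]
    positivity

lemma sum_exitValue_le (Q : GridCube d) (F : Cell d → ℝ) (μ : ℝ) (𝓔 : Finset (Edge d)) {c : ℝ}
    (hc : 0 < c) :
    ∑ e ∈ 𝓔, (Q.exitValue (1 - level F μ) e.1 (shift e.1 e.2) +
        Q.exitValue (1 - level F μ) (shift e.1 e.2) e.1) ≤
      2 * (d * c⁻¹ + 1) * edgeVar Q.edges (level F μ) + 2 * d *
        if Q.count F μ < c * Q.cells.card then (Q.cells.card : ℝ) / 2 ^ Q.scale else 0 := by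
  have hnonneg := one_sub_level_nonneg F μ
  have hout := Q.sum_exitValue_shift_le hnonneg 𝓔
  have hin := Q.sum_shift_exitValue_le hnonneg 𝓔
  simp only [edgeVar_one_sub, Pi.sub_apply, Pi.one_apply, Q.sum_one_sub_level] at hout hin
  have := mul_le_mul_of_nonneg_left (Q.card_sub_count_div_le F μ hc) d.cast_nonneg
  rw [Finset.sum_add_distrib]
  linarith

lemma edgeVar_level_le (hM : IsMaxFun 𝒬 F M) (μ : ℝ) {𝓔 : Finset (Edge d)}
    (h𝓔 : ∀ Q ∈ 𝒬, Q.edges ⊆ 𝓔) {c : ℝ} (hc : 0 < c) :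
    edgeVar 𝓔 (level M μ) ≤ (1 + 2 * (d * c⁻¹ + 1)) * edgeVar 𝓔 (level F μ) +
      2 * d * ∑ Q ∈ topCubes 𝒬 F μ with Q.count F μ < c * Q.cells.card,
        (Q.cells.card : ℝ) / 2 ^ Q.scale := by
  have hmem : ∀ Q ∈ topCubes 𝒬 F μ, Q.edges ⊆ 𝓔 := fun Q hQ => h𝓔 Q (mem_topCubes.1 hQ).prop.1
  have hsurface : 2 * (d * c⁻¹ + 1) * ∑ Q ∈ topCubes 𝒬 F μ, edgeVar Q.edges (level F μ) ≤
      2 * (d * c⁻¹ + 1) * edgeVar 𝓔 (level F μ) :=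
    mul_le_mul_of_nonneg_left (GridCube.sum_edgeVar_edges_le isAntichain_topCubes hmem _)
      (by positivity)
  calc edgeVar 𝓔 (level M μ)
      ≤ edgeVar 𝓔 (level F μ) + ∑ Q ∈ topCubes 𝒬 F μ, ∑ e ∈ 𝓔,
          (Q.exitValue (1 - level F μ) e.1 (shift e.1 e.2) +
            Q.exitValue (1 - level F μ) (shift e.1 e.2) e.1) := by
        rw [Finset.sum_comm, edgeVar, edgeVar, ← Finset.sum_add_distrib]
        exact Finset.sum_le_sum fun e _ => jump_level_le hM μ e
    _ ≤ edgeVar 𝓔 (level F μ) + ∑ Q ∈ topCubes 𝒬 F μ,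
          (2 * (d * c⁻¹ + 1) * edgeVar Q.edges (level F μ) + 2 * d *
            if Q.count F μ < c * Q.cells.card then (Q.cells.card : ℝ) / 2 ^ Q.scale else 0) :=
        add_le_add_right (Finset.sum_le_sum fun Q _ => sum_exitValue_le Q F μ 𝓔 hc) _
    _ ≤ _ := by
        rw [Finset.sum_add_distrib, ← Finset.mul_sum, ← Finset.mul_sum, Finset.sum_filter]
        linarith

/-! ### Dense subcubes and stopping cubes -/

/-- The density above which a subcube counts as dense. It is chosen so small that a cube whose
dyadic parent is not dense has at most half of its cells in the superlevel set. -/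
def densityThreshold (d : ℕ) : ℝ := (2 ^ (d + 1))⁻¹

lemma densityThreshold_pos (d : ℕ) : 0 < densityThreshold d := by
  unfold densityThreshold
  positivity

lemma densityThreshold_le_one (d : ℕ) : densityThreshold d ≤ 1 :=
  inv_le_one_of_one_le₀ (one_le_pow₀ one_le_two)

/-- `P` is dense relative to `Q` if the superlevel sets at the average over `Q` and at the midpoint
of the averages over `P` and `Q` fill a fixed proportion of `P`. -/
def IsDense (F : Cell d → ℝ) (Q P : GridCube d) : Prop :=
  densityThreshold d * P.cells.card ≤ P.count F (max (Q.avg F) ((P.avg F + Q.avg F) / 2))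

open scoped Classical in
/-- The maximal subcubes of `Q` which are dense relative to `Q`. -/
def denseCubes (F : Cell d → ℝ) (Q : GridCube d) : Finset (GridCube d) :=
  (Finset.Iic Q).filter (Maximal fun P => P ≤ Q ∧ IsDense F Q P)

variable {P : GridCube d}

lemma mem_denseCubes :
    P ∈ denseCubes F Q ↔ Maximal (fun P => P ≤ Q ∧ IsDense F Q P) P := by
  classical
  rw [denseCubes, Finset.mem_filter, Finset.mem_Iic, and_iff_right_of_imp fun h => h.prop.1]

lemma isAntichain_denseCubes : IsAntichain (· ≤ ·) (denseCubes F Q : Set (GridCube d)) :=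
  (setOfPred_maximal_antichain _).subset fun _ hP => mem_denseCubes.1 hP

lemma isDense_singleton {x : Cell d} (h : Q.avg F < F x) : IsDense F Q ⟨0, x⟩ := by
  have hmax : max (Q.avg F) ((F x + Q.avg F) / 2) < F x := max_lt h (by linarith)
  have havg : (⟨0, x⟩ : GridCube d).avg F = F x := by simp [GridCube.avg, GridCube.cells_zero]
  rw [IsDense, havg, GridCube.count, GridCube.cells_zero, Finset.sum_singleton,
    Finset.card_singleton, level_of_lt hmax, Nat.cast_one, mul_one]
  exact densityThreshold_le_one d

lemma exists_mem_denseCubes {x : Cell d} (hx : x ∈ Q.cells) (h : Q.avg F < F x) :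
    ∃ P ∈ denseCubes F Q, x ∈ P.cells := by
  have hfin : {P | P ≤ Q ∧ IsDense F Q P}.Finite := (Set.finite_Iic Q).subset fun _ hP => hP.1
  have hx0 : x ∈ (⟨0, x⟩ : GridCube d).cells := by simp [GridCube.cells_zero]
  have hmem : (⟨0, x⟩ : GridCube d) ∈ {P | P ≤ Q ∧ IsDense F Q P} :=
    ⟨GridCube.le_of_mem_cells hx0 hx (Nat.zero_le _), isDense_singleton h⟩
  obtain ⟨P, hxP, hP⟩ := hfin.exists_le_maximal hmem
  exact ⟨P, mem_denseCubes.2 hP, GridCube.cells_subset_of_le hxP hx0⟩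

lemma sum_cells_sub (P : GridCube d) (F : Cell d → ℝ) (a : ℝ) :
    ∑ x ∈ P.cells, (F x - a) = (P.avg F - a) * P.cells.card := by
  rw [Finset.sum_sub_distrib, ← P.card_mul_avg, Finset.sum_const, nsmul_eq_mul]
  ring

open scoped Classical in
lemma densityThreshold_mul_card_biUnion_le {a : ℝ} (ha : a < Q.avg F) :
    densityThreshold d * ((denseCubes F Q).biUnion GridCube.cells).card ≤ Q.count F a := by
  rw [Finset.card_biUnion (GridCube.pairwiseDisjoint_cells isAntichain_denseCubes), Nat.cast_sum,
    Finset.mul_sum]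
  calc ∑ P ∈ denseCubes F Q, densityThreshold d * P.cells.card
      ≤ ∑ P ∈ denseCubes F Q, P.count F a := Finset.sum_le_sum fun P hP =>
        (mem_denseCubes.1 hP).prop.2.trans (P.count_antitone F (ha.le.trans (le_max_left _ _)))
    _ ≤ ∑ R ∈ {Q}, R.count F a :=
        GridCube.sum_count_le_sum_count isAntichain_denseCubes (by simp)
          (fun P hP => ⟨Q, by simp, (mem_denseCubes.1 hP).prop.1⟩) F a
    _ = Q.count F a := Finset.sum_singleton _ _

open scoped Classical in
lemma sum_cells_sdiff_denseCubes_le {a : ℝ} (ha : a < Q.avg F) :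
    ∑ x ∈ Q.cells \ (denseCubes F Q).biUnion GridCube.cells, (F x - a) ≤
      (Q.avg F - a) * Q.count F a := by
  calc ∑ x ∈ Q.cells \ (denseCubes F Q).biUnion GridCube.cells, (F x - a)
      ≤ ∑ x ∈ Q.cells \ (denseCubes F Q).biUnion GridCube.cells, (Q.avg F - a) * level F a x := by
        refine Finset.sum_le_sum fun x hx => ?_
        obtain ⟨hxQ, hxU⟩ := Finset.mem_sdiff.1 hx
        have hFx : F x ≤ Q.avg F := by
          by_contra! h
          obtain ⟨P, hP, hxP⟩ := exists_mem_denseCubes hxQ h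
          exact hxU (Finset.mem_biUnion.2 ⟨P, hP, hxP⟩)
        unfold level
        split_ifs <;> linarith
    _ ≤ ∑ x ∈ Q.cells, (Q.avg F - a) * level F a x :=
        Finset.sum_le_sum_of_subset_of_nonneg Finset.sdiff_subset fun x _ _ =>
          mul_nonneg (sub_nonneg.2 ha.le) (level_nonneg _ _ _)
    _ = (Q.avg F - a) * Q.count F a := (Finset.mul_sum _ _ _).symm

/-- The total excess of the averages over the dense subcubes of `Q`. -/
def excess (F : Cell d → ℝ) (Q : GridCube d) : ℝ :=
  2 * ∑ P ∈ denseCubes F Q, max (P.avg F - Q.avg F) 0 * P.cells.card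

open scoped Classical in
lemma sum_biUnion_denseCubes_le (F : Cell d → ℝ) (Q : GridCube d) (a : ℝ) :
    ∑ x ∈ (denseCubes F Q).biUnion GridCube.cells, (F x - a) ≤
      (Q.avg F - a) * ((denseCubes F Q).biUnion GridCube.cells).card + excess F Q / 2 := by
  have hdisj := GridCube.pairwiseDisjoint_cells (isAntichain_denseCubes (F := F) (Q := Q))
  rw [Finset.sum_biUnion hdisj, Finset.card_biUnion hdisj, Nat.cast_sum, Finset.mul_sum, excess,
    mul_div_cancel_left₀ _ two_ne_zero, ← Finset.sum_add_distrib]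
  refine Finset.sum_le_sum fun P _ => ?_
  rw [sum_cells_sub, ← add_mul]
  gcongr
  linarith [le_max_left (P.avg F - Q.avg F) 0]

/-- Outside the dense subcubes `F` is at most its average over `Q`, so there the cells can raise
the average above `a` only on the small set `{F > a}`. -/
lemma avg_sub_mul_card_le_excess {a : ℝ} (ha : a < Q.avg F)
    (hlow : Q.count F a < densityThreshold d / 4 * Q.cells.card) :
    (Q.avg F - a) * Q.cells.card ≤ excess F Q := by
  classical
  have hsub : (denseCubes F Q).biUnion GridCube.cells ⊆ Q.cells :=
    Finset.biUnion_subset.2 fun P hP => GridCube.cells_subset_of_le (mem_denseCubes.1 hP).prop.1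
  have hδ := densityThreshold_pos d
  have hgap : 0 ≤ Q.avg F - a := sub_nonneg.2 ha.le
  have hdense : (((denseCubes F Q).biUnion GridCube.cells).card : ℝ) ≤ Q.cells.card / 4 :=
    le_of_mul_le_mul_left (by linarith [densityThreshold_mul_card_biUnion_le ha]) hδ
  have hcount : Q.count F a ≤ Q.cells.card / 4 := by
    nlinarith [densityThreshold_le_one d, Q.card_cells_pos]
  have hinside := sum_biUnion_denseCubes_le F Q a
  have houtside := sum_cells_sdiff_denseCubes_le ha
  have hsplit := Finset.sum_sdiff (f := fun x => F x - a) hsub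
  rw [sum_cells_sub] at hsplit
  linarith [mul_le_mul_of_nonneg_left hdense hgap, mul_le_mul_of_nonneg_left hcount hgap]

open scoped Classical in
/-- The members of `𝒬` whose average exceeds that of all larger members. -/
def records (𝒬 : Finset (GridCube d)) (F : Cell d → ℝ) : Finset (GridCube d) :=
  𝒬.filter fun Q => ∀ T ∈ 𝒬, Q < T → T.avg F < Q.avg F

lemma mem_records : Q ∈ records 𝒬 F ↔ Q ∈ 𝒬 ∧ ∀ T ∈ 𝒬, Q < T → T.avg F < Q.avg F := by
  simp [records]

lemma records_subset : records 𝒬 F ⊆ 𝒬 := fun _ hQ => (mem_records.1 hQ).1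

lemma topCubes_subset_records : topCubes 𝒬 F μ ⊆ records 𝒬 F := fun Q hQ => by
  rw [mem_topCubes] at hQ
  refine mem_records.2 ⟨hQ.prop.1, fun T hT hQT => ?_⟩
  exact (not_lt.1 fun h => hQ.not_prop_of_gt hQT ⟨hT, h⟩).trans_lt hQ.prop.2

open scoped Classical in
/-- The maximal cubes below members of `𝒬` with average above `μ`, provided `{F > μ}` fills at most
half of them. -/
def stoppingCubes (𝒬 : Finset (GridCube d)) (F : Cell d → ℝ) (μ : ℝ) : Finset (GridCube d) :=
  (𝒬.biUnion Finset.Iic).filter fun S =>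
    Maximal (fun T => T ∈ lowerClosure (𝒬 : Set (GridCube d)) ∧ μ < T.avg F) S ∧
      2 * S.count F μ ≤ S.cells.card

variable {S : GridCube d}

lemma mem_stoppingCubes : S ∈ stoppingCubes 𝒬 F μ ↔
    Maximal (fun T => T ∈ lowerClosure (𝒬 : Set (GridCube d)) ∧ μ < T.avg F) S ∧
      2 * S.count F μ ≤ S.cells.card := by
  classical
  rw [stoppingCubes, Finset.mem_filter, and_iff_right_of_imp]
  intro h
  simpa [mem_lowerClosure] using h.1.prop.1

lemma isAntichain_stoppingCubes :
    IsAntichain (· ≤ ·) (stoppingCubes 𝒬 F μ : Set (GridCube d)) :=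
  (setOfPred_maximal_antichain _).subset fun _ hS => (mem_stoppingCubes.1 hS).1

lemma GridCube.exists_parent (h : S < Q) :
    ∃ T, S < T ∧ T ≤ Q ∧ (T.cells.card : ℝ) = 2 ^ d * S.cells.card := by
  obtain ⟨x, hx⟩ := S.cells_nonempty
  have hxT := mem_cells_ancestor (S.scale + 1) x
  have hST : S ≤ ancestor (S.scale + 1) x := le_of_mem_cells hx hxT (Nat.le_succ _)
  refine ⟨_, hST.lt_of_ne fun h => S.scale.succ_ne_self (congrArg scale h).symm,
    le_of_mem_cells hxT (cells_subset_of_le h.le hx) (scale_lt_scale h), ?_⟩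
  rw [card_cells, card_cells, ← mul_pow, ← pow_succ']
  rfl

lemma count_lt_of_not_isDense (hQμ : Q.avg F ≤ μ) (hPμ : P.avg F ≤ μ) (h : ¬ IsDense F Q P) :
    P.count F μ < densityThreshold d * P.cells.card :=
  (P.count_antitone F (max_le hQμ (by linarith))).trans_lt (not_le.1 h)

lemma exists_mem_stoppingCubes (h𝒬 : (𝒬 : Set (GridCube d)).OrdConnected) (hQ : Q ∈ records 𝒬 F)
    (hQμ : Q.avg F ≤ μ) (hP : P ∈ denseCubes F Q) (hPμ : μ < P.avg F) :
    ∃ S ∈ stoppingCubes 𝒬 F μ, S < Q ∧ P ≤ S := by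
  obtain ⟨hQ𝒬, hrecord⟩ := mem_records.1 hQ
  rw [mem_denseCubes] at hP
  have hfin : {T | T ≤ Q ∧ μ < T.avg F}.Finite := (Set.finite_Iic Q).subset fun _ hT => hT.1
  obtain ⟨S, hPS, hS⟩ := hfin.exists_le_maximal (a := P) ⟨hP.prop.1, hPμ⟩
  have hSQ : S < Q := hS.prop.1.lt_of_ne fun h => hQμ.not_gt (h ▸ hS.prop.2)
  refine ⟨S, mem_stoppingCubes.2 ⟨⟨⟨mem_lowerClosure.2 ⟨Q, hQ𝒬, hSQ.le⟩, hS.prop.2⟩, ?_⟩, ?_⟩,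
    hSQ, hPS⟩
  · rintro T ⟨hT, hTμ⟩ hST
    obtain ⟨R, hR, hTR⟩ := mem_lowerClosure.1 hT
    obtain ⟨x, hx⟩ := S.cells_nonempty
    obtain hTQ | hQT := GridCube.le_or_ge_of_mem_cells (GridCube.cells_subset_of_le hST hx)
      (GridCube.cells_subset_of_le hSQ.le hx)
    · exact hS.le_of_ge ⟨hTQ, hTμ⟩ hST
    · obtain rfl | hlt := hQT.eq_or_lt
      · exact absurd hTμ hQμ.not_gt
      · linarith [hrecord T (h𝒬.out hQ𝒬 hR ⟨hQT, hTR⟩) hlt]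
  · obtain ⟨T, hST, hTQ, hcard⟩ := GridCube.exists_parent hSQ
    have hTμ : T.avg F ≤ μ := not_lt.1 fun h => hS.not_prop_of_gt hST ⟨hTQ, h⟩
    have hT : ¬ IsDense F Q T := fun h => hP.not_prop_of_gt (hPS.trans_lt hST) ⟨hTQ, h⟩
    have hcount := count_lt_of_not_isDense hQμ hTμ hT
    have hhalf : densityThreshold d * T.cells.card = S.cells.card / 2 := by
      rw [hcard, densityThreshold, pow_succ]
      field_simp
    linarith [GridCube.count_le_count F μ hST.le]

open scoped Classical in
/-- The number of cells of `{F > μ}` in the stopping cubes properly contained in `Q`. -/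
def stoppedCount (𝒬 : Finset (GridCube d)) (F : Cell d → ℝ) (μ : ℝ) (Q : GridCube d) : ℝ :=
  ∑ S ∈ stoppingCubes 𝒬 F μ with S < Q, S.count F μ

lemma stoppedCount_nonneg (𝒬 : Finset (GridCube d)) (F : Cell d → ℝ) (μ : ℝ) (Q : GridCube d) :
    0 ≤ stoppedCount 𝒬 F μ Q :=
  Finset.sum_nonneg fun S _ => S.count_nonneg F μ

lemma densityThreshold_mul_sum_card_le_stoppedCount (h𝒬 : (𝒬 : Set (GridCube d)).OrdConnected)
    (hQ : Q ∈ records 𝒬 F) (hQμ : Q.avg F ≤ μ) :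
    densityThreshold d * ∑ P ∈ denseCubes F Q with μ < (P.avg F + Q.avg F) / 2,
      (P.cells.card : ℝ) ≤ stoppedCount 𝒬 F μ Q := by
  classical
  rw [Finset.mul_sum]
  calc ∑ P ∈ denseCubes F Q with μ < (P.avg F + Q.avg F) / 2, densityThreshold d * P.cells.card
      ≤ ∑ P ∈ denseCubes F Q with μ < (P.avg F + Q.avg F) / 2, P.count F μ := by
        refine Finset.sum_le_sum fun P hP => ?_
        obtain ⟨hP, hμ⟩ := Finset.mem_filter.1 hP
        exact (mem_denseCubes.1 hP).prop.2.trans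
          (P.count_antitone F (hμ.le.trans (le_max_right _ _)))
    _ ≤ stoppedCount 𝒬 F μ Q := by
        refine GridCube.sum_count_le_sum_count
          (isAntichain_denseCubes.subset (Finset.filter_subset _ _))
          (isAntichain_stoppingCubes.subset (Finset.filter_subset _ _)) (fun P hP => ?_) F μ
        obtain ⟨hP, hμ⟩ := Finset.mem_filter.1 hP
        obtain ⟨S, hS, hSQ, hPS⟩ := exists_mem_stoppingCubes h𝒬 hQ hQμ hP (by linarith)
        exact ⟨S, Finset.mem_filter.2 ⟨hS, hSQ⟩, hPS⟩

open scoped Classical in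
/-- The cubes containing a given cube are determined by their scale, so the series is geometric. -/
lemma sum_inv_side_le (𝒬 : Finset (GridCube d)) (S : GridCube d) :
    ∑ Q ∈ 𝒬 with S < Q, ((2 : ℝ) ^ Q.scale)⁻¹ ≤ (2 ^ S.scale)⁻¹ := by
  obtain ⟨x, hx⟩ := S.cells_nonempty
  set 𝒯 := 𝒬.filter (S < ·)
  have hmem : ∀ {Q}, Q ∈ 𝒯 → S < Q := fun hQ => (Finset.mem_filter.1 hQ).2
  have hinj : Set.InjOn GridCube.scale (𝒯 : Set (GridCube d)) := fun P hP Q hQ h =>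
    GridCube.eq_of_mem_cells (GridCube.cells_subset_of_le (hmem hP).le hx)
      (GridCube.cells_subset_of_le (hmem hQ).le hx) h
  have hscales : 𝒯.image GridCube.scale ⊆
      Finset.Ico (S.scale + 1) (𝒯.sup GridCube.scale + 1) := by
    refine Finset.image_subset_iff.2 fun Q hQ => Finset.mem_Ico.2
      ⟨GridCube.scale_lt_scale (hmem hQ), Nat.lt_succ_of_le (Finset.le_sup hQ)⟩
  calc ∑ Q ∈ 𝒯, ((2 : ℝ) ^ Q.scale)⁻¹ = ∑ k ∈ 𝒯.image GridCube.scale, (2⁻¹ : ℝ) ^ k := by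
        rw [Finset.sum_image hinj]
        simp only [inv_pow]
    _ ≤ ∑ k ∈ Finset.Ico (S.scale + 1) (𝒯.sup GridCube.scale + 1), (2⁻¹ : ℝ) ^ k :=
        Finset.sum_le_sum_of_subset_of_nonneg hscales fun _ _ _ => by positivity
    _ ≤ 2⁻¹ ^ (S.scale + 1) / (1 - 2⁻¹) :=
        geom_sum_Ico_le_of_lt_one (by norm_num) (by norm_num)
    _ = (2 ^ S.scale)⁻¹ := by
        rw [pow_succ, inv_pow]
        ring

lemma sum_stoppedCount_div_le (F : Cell d → ℝ) (μ : ℝ) {𝓔 : Finset (Edge d)}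
    (h𝓔 : ∀ Q ∈ 𝒬, Q.edges ⊆ 𝓔) :
    ∑ Q ∈ 𝒬, stoppedCount 𝒬 F μ Q / 2 ^ Q.scale ≤ 2 * edgeVar 𝓔 (level F μ) := by
  classical
  have hedges : ∀ S ∈ stoppingCubes 𝒬 F μ, S.edges ⊆ 𝓔 := fun S hS =>
    have ⟨Q, hQ, hSQ⟩ := mem_lowerClosure.1 (mem_stoppingCubes.1 hS).1.prop.1
    (GridCube.edges_subset_of_le hSQ).trans (h𝓔 Q hQ)
  calc ∑ Q ∈ 𝒬, stoppedCount 𝒬 F μ Q / 2 ^ Q.scale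
      = ∑ S ∈ stoppingCubes 𝒬 F μ, S.count F μ * ∑ Q ∈ 𝒬 with S < Q, ((2 : ℝ) ^ Q.scale)⁻¹ := by
        simp only [stoppedCount, Finset.sum_filter, Finset.sum_div, Finset.mul_sum]
        rw [Finset.sum_comm]
        simp only [mul_ite, ite_mul, zero_mul, mul_zero, div_eq_mul_inv]
    _ ≤ ∑ S ∈ stoppingCubes 𝒬 F μ, 2 * edgeVar S.edges (level F μ) := by
        refine Finset.sum_le_sum fun S hS => ?_
        refine (mul_le_mul_of_nonneg_left (sum_inv_side_le 𝒬 S) (S.count_nonneg F μ)).trans ?_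
        rw [mul_inv_le_iff₀ (by positivity)]
        linarith [GridCube.count_le_of_two_mul_count_le (mem_stoppingCubes.1 hS).2]
    _ ≤ 2 * edgeVar 𝓔 (level F μ) := by
        rw [← Finset.mul_sum]
        exact mul_le_mul_of_nonneg_left
          (GridCube.sum_edgeVar_edges_le isAntichain_stoppingCubes hedges _) zero_le_two

/-! ### Integration over the levels -/

lemma measurable_level (F : Cell d → ℝ) (x : Cell d) : Measurable fun μ => level F μ x :=
  Measurable.ite (measurableSet_lt measurable_id measurable_const) measurable_const
    measurable_const

lemma measurable_jump_level (F : Cell d → ℝ) (e : Edge d) :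
    Measurable fun μ => jump (level F μ) e :=
  continuous_abs.measurable.comp ((measurable_level F _).sub (measurable_level F _))

lemma lintegral_jump_level (F : Cell d → ℝ) (e : Edge d) :
    ∫⁻ μ, ENNReal.ofReal (jump (level F μ) e) = ENNReal.ofReal (jump F e) := by
  have hind : ∀ μ, ENNReal.ofReal (jump (level F μ) e) =
      (Set.Ico (min (F e.1) (F (shift e.1 e.2))) (max (F e.1) (F (shift e.1 e.2)))).indicator
        1 μ := by
    intro μ
    simp only [jump, level, Set.indicator_apply, Set.mem_Ico, min_le_iff, lt_max_iff]
    split_ifs <;> first | (norm_num; done) | (exfalso; grind)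
  simp_rw [hind]
  rw [lintegral_indicator_one measurableSet_Ico, Real.volume_Ico, max_sub_min_eq_abs, jump]

lemma lintegral_edgeVar_level (F : Cell d → ℝ) (𝓔 : Finset (Edge d)) :
    ∫⁻ μ, ENNReal.ofReal (edgeVar 𝓔 (level F μ)) = ENNReal.ofReal (edgeVar 𝓔 F) := by
  simp_rw [edgeVar, ENNReal.ofReal_sum_of_nonneg fun e _ => jump_nonneg _ e]
  rw [lintegral_finsetSum _ fun e _ => (measurable_jump_level F e).ennreal_ofReal]
  simp_rw [lintegral_jump_level]

lemma sum_lintegral_le {ι α : Type*} [MeasurableSpace α] (ν : Measure α) (s : Finset ι)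
    (g : ι → α → ℝ≥0∞) : ∑ i ∈ s, ∫⁻ a, g i a ∂ν ≤ ∫⁻ a, ∑ i ∈ s, g i a ∂ν := by
  classical
  induction s using Finset.induction_on with
  | empty => simp
  | insert i s hi ih =>
    simp_rw [Finset.sum_insert hi]
    exact (add_le_add le_rfl ih).trans (le_lintegral_add _ _)

lemma lintegral_indicator_Ico_const {c : ℝ} (hc : 0 ≤ c) (p q : ℝ) :
    ∫⁻ μ, (Set.Ico p q).indicator (fun _ => ENNReal.ofReal c) μ =
      ENNReal.ofReal (c * (q - p)) := by
  rw [lintegral_indicator measurableSet_Ico, setLIntegral_const, Real.volume_Ico,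
    ← ENNReal.ofReal_mul hc]

lemma ofReal_excess_div (F : Cell d → ℝ) (Q : GridCube d) :
    ENNReal.ofReal (excess F Q / 2 ^ Q.scale) = ∑ P ∈ denseCubes F Q,
      ∫⁻ μ, (Set.Ico (Q.avg F) ((P.avg F + Q.avg F) / 2)).indicator
        (fun _ => ENNReal.ofReal (4 * P.cells.card / 2 ^ Q.scale)) μ := by
  rw [excess, Finset.mul_sum, Finset.sum_div,
    ENNReal.ofReal_sum_of_nonneg fun P _ => by positivity]
  refine Finset.sum_congr rfl fun P _ => ?_
  rw [lintegral_indicator_Ico_const (by positivity)]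
  rcases le_total (P.avg F - Q.avg F) 0 with h | h
  · rw [max_eq_right h, ENNReal.ofReal_of_nonpos (by simp), ENNReal.ofReal_of_nonpos]
    exact mul_nonpos_of_nonneg_of_nonpos (by positivity) (by linarith)
  · rw [max_eq_left h]
    congr 1
    ring

lemma sum_indicator_denseCubes_le (h𝒬 : (𝒬 : Set (GridCube d)).OrdConnected)
    (hQ : Q ∈ records 𝒬 F) (μ : ℝ) :
    ∑ P ∈ denseCubes F Q, (Set.Ico (Q.avg F) ((P.avg F + Q.avg F) / 2)).indicator
        (fun _ => ENNReal.ofReal (4 * P.cells.card / 2 ^ Q.scale)) μ ≤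
      ENNReal.ofReal (4 / densityThreshold d * (stoppedCount 𝒬 F μ Q / 2 ^ Q.scale)) := by
  classical
  have hδ := densityThreshold_pos d
  rcases lt_or_ge μ (Q.avg F) with hμ | hμ
  · refine le_of_eq_of_le (Finset.sum_eq_zero fun P _ => ?_) zero_le
    exact Set.indicator_of_notMem (fun h => hμ.not_ge h.1) _
  · simp only [Set.indicator_apply, Set.mem_Ico, hμ, true_and]
    rw [← Finset.sum_filter, ← ENNReal.ofReal_sum_of_nonneg fun P _ => by positivity]
    refine ENNReal.ofReal_le_ofReal ?_
    rw [← Finset.sum_div, ← Finset.mul_sum, ← mul_div_assoc, div_mul_eq_mul_div]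
    refine div_le_div_of_nonneg_right ((le_div_iff₀ hδ).2 ?_) (by positivity)
    linarith [densityThreshold_mul_sum_card_le_stoppedCount h𝒬 hQ hμ]

lemma sum_ofReal_excess_le (h𝒬 : (𝒬 : Set (GridCube d)).OrdConnected) (F : Cell d → ℝ)
    {𝓔 : Finset (Edge d)} (h𝓔 : ∀ Q ∈ 𝒬, Q.edges ⊆ 𝓔) :
    ∑ Q ∈ records 𝒬 F, ENNReal.ofReal (excess F Q / 2 ^ Q.scale) ≤
      ENNReal.ofReal (8 / densityThreshold d) * ENNReal.ofReal (edgeVar 𝓔 F) := by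
  have hδ := densityThreshold_pos d
  have hnonneg : ∀ μ Q, 0 ≤ 4 / densityThreshold d * (stoppedCount 𝒬 F μ Q / 2 ^ Q.scale) :=
    fun μ Q => mul_nonneg (by positivity) (div_nonneg (stoppedCount_nonneg _ _ _ _) (by positivity))
  calc ∑ Q ∈ records 𝒬 F, ENNReal.ofReal (excess F Q / 2 ^ Q.scale)
      ≤ ∑ Q ∈ records 𝒬 F,
          ∫⁻ μ, ENNReal.ofReal (4 / densityThreshold d * (stoppedCount 𝒬 F μ Q / 2 ^ Q.scale)) :=
        Finset.sum_le_sum fun Q hQ => by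
          rw [ofReal_excess_div]
          exact (sum_lintegral_le _ _ _).trans
            (lintegral_mono (sum_indicator_denseCubes_le h𝒬 hQ))
    _ ≤ ∫⁻ μ, ∑ Q ∈ records 𝒬 F,
          ENNReal.ofReal (4 / densityThreshold d * (stoppedCount 𝒬 F μ Q / 2 ^ Q.scale)) :=
        sum_lintegral_le _ _ _
    _ ≤ ∫⁻ μ, ENNReal.ofReal (8 / densityThreshold d) *
          ENNReal.ofReal (edgeVar 𝓔 (level F μ)) := by
        refine lintegral_mono fun μ => ?_
        rw [← ENNReal.ofReal_sum_of_nonneg fun Q _ => hnonneg μ Q,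
          ← ENNReal.ofReal_mul (by positivity)]
        refine ENNReal.ofReal_le_ofReal
          ((Finset.sum_le_sum_of_subset_of_nonneg records_subset fun Q _ _ => hnonneg μ Q).trans ?_)
        rw [← Finset.mul_sum]
        refine (mul_le_mul_of_nonneg_left (sum_stoppedCount_div_le F μ h𝓔)
          (by positivity)).trans_eq ?_
        ring
    _ = ENNReal.ofReal (8 / densityThreshold d) * ENNReal.ofReal (edgeVar 𝓔 F) := by
        rw [lintegral_const_mul' _ _ ENNReal.ofReal_ne_top, lintegral_edgeVar_level]

lemma lintegral_sum_low_le (h𝒬 : (𝒬 : Set (GridCube d)).OrdConnected) (F : Cell d → ℝ)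
    {𝓔 : Finset (Edge d)} (h𝓔 : ∀ Q ∈ 𝒬, Q.edges ⊆ 𝓔) :
    ∫⁻ μ, ENNReal.ofReal (∑ Q ∈ topCubes 𝒬 F μ with
        Q.count F μ < densityThreshold d / 4 * Q.cells.card, (Q.cells.card : ℝ) / 2 ^ Q.scale) ≤
      ENNReal.ofReal (8 / densityThreshold d) * ENNReal.ofReal (edgeVar 𝓔 F) := by
  classical
  refine le_trans ?_ (sum_ofReal_excess_le h𝒬 F h𝓔)
  calc ∫⁻ μ, ENNReal.ofReal (∑ Q ∈ topCubes 𝒬 F μ with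
        Q.count F μ < densityThreshold d / 4 * Q.cells.card, (Q.cells.card : ℝ) / 2 ^ Q.scale)
      ≤ ∫⁻ μ, ∑ Q ∈ records 𝒬 F,
          (Set.Ico (Q.avg F - excess F Q / Q.cells.card) (Q.avg F)).indicator
            (fun _ => ENNReal.ofReal (Q.cells.card / 2 ^ Q.scale)) μ := by
        refine lintegral_mono fun μ => ?_
        rw [ENNReal.ofReal_sum_of_nonneg fun Q _ => by positivity]
        refine (Finset.sum_le_sum fun Q hQ => ?_).trans (Finset.sum_le_sum_of_subset
          ((Finset.filter_subset _ _).trans topCubes_subset_records))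
        obtain ⟨hQ, hlow⟩ := Finset.mem_filter.1 hQ
        have hμ : μ < Q.avg F := (mem_topCubes.1 hQ).prop.2
        rw [Set.indicator_of_mem]
        refine ⟨?_, hμ⟩
        rw [sub_le_comm, le_div_iff₀ Q.card_cells_pos]
        exact avg_sub_mul_card_le_excess hμ hlow
    _ = ∑ Q ∈ records 𝒬 F, ENNReal.ofReal (excess F Q / 2 ^ Q.scale) := by
        rw [lintegral_finsetSum _ fun Q _ => measurable_const.indicator measurableSet_Ico]
        refine Finset.sum_congr rfl fun Q _ => ?_
        rw [lintegral_indicator_Ico_const (by positivity)]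
        congr 1
        have := Q.card_cells_pos
        field_simp
        ring

/-- The factor by which the maximal function may increase the variation on the grid: the sum of
the contributions of a fixed level and of the top cubes of low density. -/
def discreteConst (d : ℕ) : ℝ :=
  1 + 2 * (d * (densityThreshold d / 4)⁻¹ + 1) + 2 * d * (8 / densityThreshold d)

lemma discreteConst_nonneg (d : ℕ) : 0 ≤ discreteConst d := by
  have := densityThreshold_pos d
  unfold discreteConst
  positivity

theorem edgeVar_le_of_isMaxFun (h𝒬 : (𝒬 : Set (GridCube d)).OrdConnected) (hM : IsMaxFun 𝒬 F M)
    {𝓔 : Finset (Edge d)} (h𝓔 : ∀ Q ∈ 𝒬, Q.edges ⊆ 𝓔) :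
    edgeVar 𝓔 M ≤ discreteConst d * edgeVar 𝓔 F := by
  classical
  have hδ := densityThreshold_pos d
  have hF := edgeVar_nonneg 𝓔 F
  let A : ℝ := 1 + 2 * (d * (densityThreshold d / 4)⁻¹ + 1)
  have hA0 : 0 ≤ A := by positivity
  rw [← ENNReal.ofReal_le_ofReal_iff (mul_nonneg (discreteConst_nonneg d) hF),
    ← lintegral_edgeVar_level M 𝓔]
  calc ∫⁻ μ, ENNReal.ofReal (edgeVar 𝓔 (level M μ))
      ≤ ∫⁻ μ, (ENNReal.ofReal A * ENNReal.ofReal (edgeVar 𝓔 (level F μ)) +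
          ENNReal.ofReal (2 * d) * ENNReal.ofReal (∑ Q ∈ topCubes 𝒬 F μ with
            Q.count F μ < densityThreshold d / 4 * Q.cells.card,
              (Q.cells.card : ℝ) / 2 ^ Q.scale)) := by
        refine lintegral_mono fun μ => ?_
        rw [← ENNReal.ofReal_mul hA0, ← ENNReal.ofReal_mul (by positivity)]
        exact (ENNReal.ofReal_le_ofReal (edgeVar_level_le hM μ h𝓔 (by positivity))).trans
          ENNReal.ofReal_add_le
    _ ≤ ENNReal.ofReal A * ENNReal.ofReal (edgeVar 𝓔 F) + ENNReal.ofReal (2 * d) *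
          (ENNReal.ofReal (8 / densityThreshold d) * ENNReal.ofReal (edgeVar 𝓔 F)) := by
        rw [lintegral_add_left, lintegral_const_mul' _ _ ENNReal.ofReal_ne_top,
          lintegral_const_mul' _ _ ENNReal.ofReal_ne_top, lintegral_edgeVar_level]
        · gcongr
          exact lintegral_sum_low_le h𝒬 F h𝓔
        · exact (Finset.measurable_sum _ fun e _ =>
            measurable_jump_level F e).ennreal_ofReal.const_mul _
    _ = ENNReal.ofReal (discreteConst d * edgeVar 𝓔 F) := by
        rw [← mul_assoc, ← ENNReal.ofReal_mul hA0, ← ENNReal.ofReal_mul (by positivity),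
          ← ENNReal.ofReal_mul (by positivity), ← ENNReal.ofReal_add (by positivity)
          (by positivity), ← add_mul]
        rfl

end Discrete

/-! ### The grid of cells of side `2 ^ (-s)` -/

section Grid

variable {d : ℕ}

/-- The cell that contains `y` when the cells of the grid have side `2 ^ (-s)`. -/
def cellAt (s : ℕ) (y : Ed d) : Cell d := fun i => ⌊(2 : ℝ) ^ s * y i⌋

/-- The points of the cell `x` of side `2 ^ (-s)`. -/
def cellSet (s : ℕ) (x : Cell d) : Set (Ed d) := cellAt s ⁻¹' {x}

/-- The points of a dyadic cube of cells of side `2 ^ (-s)`. -/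
def cubeSet (s : ℕ) (Q : GridCube d) : Set (Ed d) := cellAt s ⁻¹' Q.cells

/-- The average of `f` over the cell `x` of side `2 ^ (-s)`. -/
def cellAvg (s : ℕ) (f : Ed d → ℝ) (x : Cell d) : ℝ := ⨍ y in cellSet s x, f y

lemma cellAt_apply (s : ℕ) (y : Ed d) (i : Fin d) : cellAt s y i = ⌊(2 : ℝ) ^ s * y i⌋ := rfl

lemma mem_cellSet {s : ℕ} {x : Cell d} {y : Ed d} : y ∈ cellSet s x ↔ cellAt s y = x := Iff.rfl

lemma measurable_cellAt (s : ℕ) : Measurable (cellAt s : Ed d → Cell d) := by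
  refine measurable_pi_iff.2 fun i => Int.measurable_floor.comp (Continuous.measurable ?_)
  fun_prop

lemma measurableSet_cellSet (s : ℕ) (x : Cell d) : MeasurableSet (cellSet s x) :=
  measurable_cellAt s (measurableSet_singleton x)

lemma pairwise_disjoint_cellSet (s : ℕ) :
    Pairwise (Function.onFun Disjoint (cellSet s : Cell d → Set (Ed d))) :=
  fun _ _ h => Disjoint.preimage _ (Set.disjoint_singleton.2 h)

lemma volume_box (a b : Fin d → ℝ) :
    volume {y : Ed d | ∀ i, y i ∈ Ico (a i) (b i)} = ∏ i, ENNReal.ofReal (b i - a i) := by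
  rw [← Real.volume_pi_Ico, ← (EuclideanSpace.volume_preserving_symm_measurableEquiv_toLp
    (Fin d)).measure_preimage]
  · congr 1
    ext y
    simp [Set.mem_pi]
  · exact (MeasurableSet.univ_pi fun i => measurableSet_Ico).nullMeasurableSet

lemma mem_cellSet_iff {s : ℕ} {x : Cell d} {y : Ed d} :
    y ∈ cellSet s x ↔ ∀ i, y i ∈ Ico (x i / (2 : ℝ) ^ s) ((x i + 1) / (2 : ℝ) ^ s) := by
  have h : (0 : ℝ) < 2 ^ s := by positivity
  rw [mem_cellSet, funext_iff]
  refine forall_congr' fun i => ?_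
  rw [cellAt_apply, Int.floor_eq_iff, mem_Ico, div_le_iff₀ h, lt_div_iff₀ h, mul_comm]

lemma volume_cellSet (s : ℕ) (x : Cell d) :
    volume (cellSet s x) = ENNReal.ofReal (((2 : ℝ) ^ s) ^ d)⁻¹ := by
  have hbox : cellSet s x =
      {y : Ed d | ∀ i, y i ∈ Ico (x i / (2 : ℝ) ^ s) ((x i + 1) / (2 : ℝ) ^ s)} :=
    Set.ext fun y => mem_cellSet_iff
  have hside : ∀ i, ((x i : ℝ) + 1) / 2 ^ s - x i / 2 ^ s = (2 ^ s)⁻¹ := fun i => by ring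
  simp_rw [hbox, volume_box, hside]
  rw [Finset.prod_const, Finset.card_univ, Fintype.card_fin, ← ENNReal.ofReal_pow (by positivity),
    inv_pow]

lemma volume_cellSet_ne_top (s : ℕ) (x : Cell d) : volume (cellSet s x) ≠ ∞ := by
  rw [volume_cellSet]
  exact ENNReal.ofReal_ne_top

lemma volume_cellSet_ne_zero (s : ℕ) (x : Cell d) : volume (cellSet s x) ≠ 0 := by
  rw [volume_cellSet]
  exact (ENNReal.ofReal_pos.2 (by positivity)).ne'

lemma volume_real_cellSet (s : ℕ) (x : Cell d) :
    volume.real (cellSet s x) = (((2 : ℝ) ^ s) ^ d)⁻¹ := by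
  rw [Measure.real, volume_cellSet, ENNReal.toReal_ofReal (by positivity)]

lemma cellAvg_eq (s : ℕ) (f : Ed d → ℝ) (x : Cell d) :
    cellAvg s f x = (2 ^ s) ^ d * ∫ y in cellSet s x, f y := by
  rw [cellAvg, setAverage_eq, volume_real_cellSet, inv_inv, smul_eq_mul]

lemma cellAvg_sub (s : ℕ) {f g : Ed d → ℝ} (hf : Integrable f) (hg : Integrable g) (x : Cell d) :
    cellAvg s (fun y => f y - g y) x = cellAvg s f x - cellAvg s g x := by
  simp only [cellAvg_eq]
  rw [integral_sub hf.integrableOn hg.integrableOn, mul_sub]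

lemma integrableOn_cellSet_comp_cellAt (s : ℕ) (U : Cell d → ℝ) (x : Cell d) :
    IntegrableOn (fun y => U (cellAt s y)) (cellSet s x) :=
  (integrableOn_const (C := U x) (volume_cellSet_ne_top s x)).congr_fun
    (fun y hy => by simp only [mem_cellSet.1 hy]) (measurableSet_cellSet s x)

lemma setIntegral_cellSet_comp_cellAt (s : ℕ) (U : Cell d → ℝ) (x : Cell d) :
    ∫ y in cellSet s x, U (cellAt s y) = (((2 : ℝ) ^ s) ^ d)⁻¹ * U x := by
  rw [setIntegral_congr_fun (g := fun _ => U x) (measurableSet_cellSet s x)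
    fun y hy => by simp only [mem_cellSet.1 hy], setIntegral_const, volume_real_cellSet,
    smul_eq_mul]

lemma setIntegral_biUnion_cellSet (s : ℕ) (Z : Finset (Cell d)) {f : Ed d → ℝ}
    (hf : ∀ x ∈ Z, IntegrableOn f (cellSet s x)) :
    ∫ y in ⋃ x ∈ Z, cellSet s x, f y = ∑ x ∈ Z, ∫ y in cellSet s x, f y :=
  integral_biUnion_finset _ (fun x _ => measurableSet_cellSet s x)
    ((pairwise_disjoint_cellSet s).set_pairwise _) hf

lemma biUnion_cellSet (s : ℕ) (Z : Finset (Cell d)) :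
    ⋃ x ∈ Z, cellSet s x = cellAt s ⁻¹' Z := by
  ext y
  simp [mem_cellSet]

lemma avg_cellAvg (s : ℕ) {f : Ed d → ℝ} (hf : Integrable f) (Q : GridCube d) :
    Q.avg (cellAvg s f) = ⨍ y in cubeSet s Q, f y := by
  have hvol : volume.real (cubeSet s Q) = Q.cells.card * (((2 : ℝ) ^ s) ^ d)⁻¹ := by
    rw [cubeSet, ← biUnion_cellSet,
      measureReal_biUnion_finset ((pairwise_disjoint_cellSet s).set_pairwise _)
        (fun x _ => measurableSet_cellSet s x) (fun x _ => volume_cellSet_ne_top s x)]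
    simp only [volume_real_cellSet, Finset.sum_const, nsmul_eq_mul]
  have hint : ∫ y in cubeSet s Q, f y = ∑ x ∈ Q.cells, ∫ y in cellSet s x, f y := by
    rw [cubeSet, ← biUnion_cellSet, setIntegral_biUnion_cellSet s _ fun x _ => hf.integrableOn]
  rw [setAverage_eq, hvol, hint, GridCube.avg, smul_eq_mul]
  simp only [cellAvg_eq]
  rw [← Finset.mul_sum]
  have := Q.card_cells_pos
  field_simp

lemma finite_image_cellAt (s : ℕ) {K : Set (Ed d)} (hK : Bornology.IsBounded K) :
    (cellAt s '' K).Finite := by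
  obtain ⟨R, hR⟩ := hK.exists_norm_le
  refine (Set.finite_Icc (fun _ : Fin d => ⌊-((2 : ℝ) ^ s * R)⌋)
    (fun _ => ⌊(2 : ℝ) ^ s * R⌋)).subset ?_
  rintro _ ⟨y, hy, rfl⟩
  have h : ∀ i, |y i| ≤ R := fun i => (PiLp.norm_apply_le y i).trans (hR y hy)
  refine ⟨fun i => Int.floor_mono ?_, fun i => Int.floor_mono ?_⟩
  · rw [← mul_neg]
    exact mul_le_mul_of_nonneg_left (abs_le.1 (h i)).1 (by positivity)
  · exact mul_le_mul_of_nonneg_left (abs_le.1 (h i)).2 (by positivity)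

lemma exists_subset_biUnion_cellSet (s : ℕ) {K : Set (Ed d)} (hK : Bornology.IsBounded K) :
    ∃ Z : Finset (Cell d), K ⊆ ⋃ x ∈ Z, cellSet s x :=
  ⟨(finite_image_cellAt s hK).toFinset, fun y hy => by
    rw [biUnion_cellSet]
    simpa using ⟨y, hy, rfl⟩⟩

lemma locallyIntegrable_comp_cellAt (s : ℕ) (U : Cell d → ℝ) :
    LocallyIntegrable fun y : Ed d => U (cellAt s y) := by
  refine locallyIntegrable_iff.2 fun K hK => ?_
  obtain ⟨Z, hZ⟩ := exists_subset_biUnion_cellSet s hK.isBounded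
  exact (integrableOn_finset_iUnion.2 fun x _ => integrableOn_cellSet_comp_cellAt s U x).mono_set hZ

lemma norm_sub_le_of_abs_le {y z : Ed d} {r : ℝ} (h : ∀ i, |y i - z i| ≤ r) :
    ‖y - z‖ ≤ d * r := by
  refine (EuclideanSpace.norm_eq _).trans_le ((Real.sqrt_le_iff.2
    ⟨Finset.sum_nonneg fun i _ => norm_nonneg ((y - z) i),
      Finset.sum_sq_le_sq_sum_of_nonneg fun _ _ => norm_nonneg _⟩).trans ?_)
  simpa using Finset.sum_le_card_nsmul Finset.univ (fun i => ‖(y - z) i‖) r fun i _ => h i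

lemma dist_le_of_abs_cellAt_sub_le {s : ℕ} {y z : Ed d} {k : ℤ}
    (h : ∀ i, |cellAt s y i - cellAt s z i| ≤ k) : dist y z ≤ d * ((k + 1) * (2 ^ s)⁻¹) := by
  rw [dist_eq_norm]
  refine norm_sub_le_of_abs_le fun i => ?_
  have hk : |(cellAt s y i : ℝ) - cellAt s z i| ≤ k := by exact_mod_cast h i
  simp only [cellAt_apply] at hk
  rw [← div_eq_mul_inv, le_div_iff₀ (by positivity),
    ← abs_of_pos (by positivity : (0 : ℝ) < 2 ^ s), ← abs_mul]
  rw [abs_le] at hk ⊢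
  have hy := Int.floor_le ((2 : ℝ) ^ s * y i)
  have hy' := Int.lt_floor_add_one ((2 : ℝ) ^ s * y i)
  have hz := Int.floor_le ((2 : ℝ) ^ s * z i)
  have hz' := Int.lt_floor_add_one ((2 : ℝ) ^ s * z i)
  constructor <;> linarith

lemma tendsto_const_mul_inv_two_pow (c : ℝ) :
    Tendsto (fun s : ℕ => c * ((2 : ℝ) ^ s)⁻¹) atTop (𝓝 0) := by
  simpa using (tendsto_inv_atTop_zero.comp
    (tendsto_pow_atTop_atTop_of_one_lt (one_lt_two (α := ℝ)))).const_mul c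

lemma setIntegral_abs_cellAvg_le (s : ℕ) {f : Ed d → ℝ} (hf : Integrable f) {K : Set (Ed d)}
    (hK : Bornology.IsBounded K) : ∫ y in K, |cellAvg s f (cellAt s y)| ≤ ∫ y, |f y| := by
  obtain ⟨Z, hZ⟩ := exists_subset_biUnion_cellSet s hK
  have hint : ∀ x ∈ Z, IntegrableOn (fun y => |cellAvg s f (cellAt s y)|) (cellSet s x) :=
    fun x _ => integrableOn_cellSet_comp_cellAt s (fun x => |cellAvg s f x|) x
  calc ∫ y in K, |cellAvg s f (cellAt s y)|
      ≤ ∫ y in ⋃ x ∈ Z, cellSet s x, |cellAvg s f (cellAt s y)| :=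
        setIntegral_mono_set (integrableOn_finset_iUnion.2 hint)
          (Eventually.of_forall fun y => abs_nonneg _) hZ.eventuallyLE
    _ = ∑ x ∈ Z, (((2 : ℝ) ^ s) ^ d)⁻¹ * |cellAvg s f x| := by
        rw [setIntegral_biUnion_cellSet s Z hint]
        exact Finset.sum_congr rfl fun x _ =>
          setIntegral_cellSet_comp_cellAt s (fun x => |cellAvg s f x|) x
    _ ≤ ∑ x ∈ Z, ∫ y in cellSet s x, |f y| := by
        refine Finset.sum_le_sum fun x _ => ?_
        rw [cellAvg_eq, abs_mul, abs_of_pos (by positivity), inv_mul_cancel_left₀ (by positivity)]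
        exact abs_integral_le_integral_abs
    _ = ∫ y in ⋃ x ∈ Z, cellSet s x, |f y| :=
        (setIntegral_biUnion_cellSet s Z fun x _ => hf.abs.integrableOn).symm
    _ ≤ ∫ y, |f y| := setIntegral_le_integral hf.abs (Eventually.of_forall fun y => abs_nonneg _)

lemma eventually_abs_sub_cellAvg_le {g : Ed d → ℝ} (hg : UniformContinuous g)
    (hgi : Integrable g) {ε : ℝ} (hε : 0 < ε) :
    ∀ᶠ s in atTop, ∀ y, |g y - cellAvg s g (cellAt s y)| ≤ ε := by
  obtain ⟨δ, hδ, hgδ⟩ := Metric.uniformContinuous_iff.1 hg ε hε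
  filter_upwards [(tendsto_const_mul_inv_two_pow d).eventually_lt_const hδ] with s hs y
  have hmem : cellAvg s g (cellAt s y) ∈ closedBall (g y) ε := by
    refine (convex_closedBall _ _).set_average_mem isClosed_closedBall (volume_cellSet_ne_zero _ _)
      (volume_cellSet_ne_top _ _) (ae_restrict_of_forall_mem (measurableSet_cellSet _ _)
        fun z hz => ?_) hgi.integrableOn
    refine (hgδ ((dist_le_of_abs_cellAt_sub_le (s := s) (k := 0) fun i => ?_).trans_lt ?_)).le
    · simp [mem_cellSet.1 hz]
    · simpa using hs
  rwa [mem_closedBall', Real.dist_eq] at hmem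

lemma setIntegral_abs_sub_cellAvg_le (s : ℕ) {f g : Ed d → ℝ} (hf : Integrable f)
    (hg : Integrable g) {η : ℝ} (hη : ∀ y, |g y - cellAvg s g (cellAt s y)| ≤ η)
    {K : Set (Ed d)} (hK : IsCompact K) :
    ∫ y in K, |f y - cellAvg s f (cellAt s y)| ≤ 2 * (∫ y, |f y - g y|) + volume.real K * η := by
  have hfg : Integrable fun y => f y - g y := hf.sub hg
  have havg : ∀ h : Ed d → ℝ, IntegrableOn (fun y => cellAvg s h (cellAt s y)) K := fun h =>
    (locallyIntegrable_comp_cellAt s _).integrableOn_isCompact hK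
  have hsum : IntegrableOn (fun y => |f y - g y| +
      |cellAvg s (fun y => f y - g y) (cellAt s y)|) K :=
    hfg.abs.integrableOn.add (havg _).abs
  have hη' : IntegrableOn (fun _ => η) K := integrableOn_const hK.measure_lt_top.ne
  have hpoint : ∀ y, |f y - cellAvg s f (cellAt s y)| ≤
      |f y - g y| + |cellAvg s (fun y => f y - g y) (cellAt s y)| + η := fun y => by
    rw [cellAvg_sub s hf hg, show f y - cellAvg s f (cellAt s y) = (f y - g y) -
      (cellAvg s f (cellAt s y) - cellAvg s g (cellAt s y)) +
        (g y - cellAvg s g (cellAt s y)) by ring]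
    exact (abs_add_le _ _).trans (add_le_add (abs_sub _ _) (hη y))
  calc ∫ y in K, |f y - cellAvg s f (cellAt s y)|
      ≤ ∫ y in K, (|f y - g y| + |cellAvg s (fun y => f y - g y) (cellAt s y)| + η) :=
        integral_mono (hf.integrableOn.sub (havg f)).abs (hsum.add hη') hpoint
    _ = (∫ y in K, |f y - g y|) + (∫ y in K, |cellAvg s (fun y => f y - g y) (cellAt s y)|) +
          volume.real K * η := by
        rw [integral_add hsum hη', integral_add hfg.abs.integrableOn (havg _).abs,
          setIntegral_const, smul_eq_mul]
    _ ≤ 2 * (∫ y, |f y - g y|) + volume.real K * η := by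
        have hK₁ : ∫ y in K, |f y - g y| ≤ ∫ y, |f y - g y| :=
          setIntegral_le_integral hfg.abs (Eventually.of_forall fun y => abs_nonneg _)
        linarith [setIntegral_abs_cellAvg_le s hfg hK.isBounded]

lemma tendsto_setIntegral_abs_sub_cellAvg {f : Ed d → ℝ} (hf : Integrable f) {K : Set (Ed d)}
    (hK : IsCompact K) :
    Tendsto (fun s => ∫ y in K, |f y - cellAvg s f (cellAt s y)|) atTop (𝓝 0) := by
  refine Metric.tendsto_nhds.2 fun ε hε => ?_
  obtain ⟨g, hgs, hfg, hgc, hgi⟩ :=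
    hf.exists_hasCompactSupport_integral_sub_le (ε := ε / 4) (by positivity)
  filter_upwards [eventually_abs_sub_cellAvg_le (hgs.uniformContinuous_of_continuous hgc) hgi
    (ε := ε / (4 * (volume.real K + 1))) (by positivity)] with s hs
  have hsmall : volume.real K * (ε / (4 * (volume.real K + 1))) ≤ ε / 4 := by
    rw [mul_div_assoc', div_le_iff₀ (by positivity)]
    linarith
  rw [Real.dist_0_eq_abs, abs_of_nonneg (integral_nonneg fun y => abs_nonneg _)]
  have hfg' : ∫ y, |f y - g y| ≤ ε / 4 := hfg
  linarith [setIntegral_abs_sub_cellAvg_le s hf hgi hs hK]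

end Grid

/-! ### The variation of step functions -/

section Translation

variable {E : Type*} [NormedAddCommGroup E] [MeasurableSpace E] [BorelSpace E] {μ : Measure E}

lemma integral_mul_add_sub_eq [μ.IsAddRightInvariant] {V u : E → ℝ}
    (hV : LocallyIntegrable V μ) (hu : Continuous u) (huc : HasCompactSupport u) (w : E) :
    ∫ y, V y * (u (y + w) - u y) ∂μ = ∫ y, (V (y - w) - V y) * u y ∂μ := by
  have huw : HasCompactSupport fun y => u (y + w) := huc.comp_homeomorph (Homeomorph.addRight w)
  have hVu : Integrable (fun y => V y * u y) μ :=
    hV.integrable_smul_right_of_hasCompactSupport hu huc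
  have hVuw : Integrable (fun y => V y * u (y + w)) μ :=
    hV.integrable_smul_right_of_hasCompactSupport (by fun_prop) huw
  have hVwu : Integrable (fun y => V (y - w) * u y) μ := by
    simpa using hVuw.comp_sub_right w
  simp_rw [mul_sub, sub_mul]
  rw [integral_sub hVuw hVu, integral_sub hVwu hVu,
    ← integral_add_right_eq_self (fun y => V (y - w) * u y) w]
  simp only [add_sub_cancel_right]

lemma tendsto_inv_mul_integral_sub_mul [NormedSpace ℝ E] [FiniteDimensional ℝ E]
    [μ.IsAddHaarMeasure] {V u : E → ℝ} (hV : LocallyIntegrable V μ) (hu : ContDiff ℝ 1 u)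
    (huc : HasCompactSupport u) (v : E) :
    Tendsto (fun h : ℝ => h⁻¹ * ∫ y, (V (y - h • v) - V y) * u y ∂μ) (𝓝[>] 0)
      (𝓝 (∫ y, V y * fderiv ℝ u y v ∂μ)) := by
  obtain ⟨L, hL⟩ := hu.lipschitzWith_of_hasCompactSupport huc one_ne_zero
  let K := cthickening ‖v‖ (tsupport u)
  have hK : IsCompact K := huc.isCompact.cthickening
  have hsub : tsupport u ⊆ K := self_subset_cthickening _
  have hlim := hL.integral_inv_smul_sub_mul_tendsto_integral_lineDeriv_mul
    ((hV.integrableOn_isCompact hK).integrable_indicator hK.measurableSet) v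
  have hderiv : ∫ y, lineDeriv ℝ u y v * K.indicator V y ∂μ = ∫ y, V y * fderiv ℝ u y v ∂μ := by
    refine integral_congr_ae (Eventually.of_forall fun y => ?_)
    have hy := ((hu.differentiable one_ne_zero) y).lineDeriv_eq_fderiv (v := v)
    by_cases hyK : y ∈ K
    · simp only [hy, Set.indicator_of_mem hyK, mul_comm]
    · have hzero : fderiv ℝ u y = 0 := image_eq_zero_of_notMem_tsupport fun hmem =>
        hyK (hsub (tsupport_fderiv_subset ℝ hmem))
      simp [hy, hzero]
  rw [hderiv] at hlim
  refine hlim.congr' ?_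
  filter_upwards [Ioc_mem_nhdsGT (one_pos : (0 : ℝ) < 1)] with h hh
  rw [← integral_mul_add_sub_eq hV hu.continuous huc, ← integral_const_mul]
  refine integral_congr_ae (Eventually.of_forall fun y => ?_)
  by_cases hyK : y ∈ K
  · simp only [Set.indicator_of_mem hyK, smul_eq_mul]
    ring
  · have hzero : u y = 0 := image_eq_zero_of_notMem_tsupport fun hmem => hyK (hsub hmem)
    have hzero' : u (y + h • v) = 0 := image_eq_zero_of_notMem_tsupport fun hmem =>
      hyK <| mem_cthickening_of_dist_le y (y + h • v) _ _ hmem <| by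
        rw [dist_self_add_right, norm_smul, Real.norm_of_nonneg hh.1.le]
        exact mul_le_of_le_one_left (norm_nonneg v) hh.2
    simp [hzero, hzero', hyK]

end Translation

section Step

variable {d : ℕ}

/-- The neighbour of `x` in the negative `i`-th direction. -/
def pred (x : Cell d) (i : Fin d) : Cell d := Function.update x i (x i - 1)

lemma shift_pred (x : Cell d) (i : Fin d) : shift (pred x i) i = x := by
  simp [shift, pred]

/-- The area of a face of a cell of side `2 ^ (-s)`. -/
def faceArea (d s : ℕ) : ℝ := 2 ^ s / (2 ^ s) ^ d

lemma faceArea_pos (d s : ℕ) : 0 < faceArea d s := by unfold faceArea; positivity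

/-- The part of the cell `z` of side `2 ^ (-s)` within distance `h` of its lower face in
direction `i`. -/
def slab (s : ℕ) (h : ℝ) (i : Fin d) (z : Cell d) : Set (Ed d) :=
  {y | ∀ j, y j ∈ Ico (z j / (2 : ℝ) ^ s)
    (z j / (2 : ℝ) ^ s + (2 ^ s)⁻¹ * if j = i then 2 ^ s * h else 1)}

lemma measurableSet_slab (s : ℕ) (h : ℝ) (i : Fin d) (z : Cell d) :
    MeasurableSet (slab s h i z) := by
  simp only [slab, Set.ofPred_forall]
  refine MeasurableSet.iInter fun j => measurableSet_Ico.preimage (Continuous.measurable ?_)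
  fun_prop

lemma volume_slab (s : ℕ) {h : ℝ} (hh : 0 ≤ h) (i : Fin d) (z : Cell d) :
    volume (slab s h i z) = ENNReal.ofReal (h * faceArea d s) := by
  rw [slab, volume_box]
  simp_rw [add_sub_cancel_left]
  rw [← ENNReal.ofReal_prod_of_nonneg, Finset.prod_mul_distrib, Finset.prod_ite_eq']
  · simp only [Finset.prod_const, Finset.card_univ, Fintype.card_fin, Finset.mem_univ, if_true,
      faceArea]
    congr 1
    rw [inv_pow]
    ring
  · intro j _
    split_ifs <;> positivity

lemma cellAt_sub_single (s : ℕ) {h : ℝ} (hh : 0 < h) (hs : 2 ^ s * h < 1) (i : Fin d) (y : Ed d) :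
    cellAt s (y - EuclideanSpace.single i h) = cellAt s y ∨ (y ∈ slab s h i (cellAt s y) ∧
      cellAt s (y - EuclideanSpace.single i h) = pred (cellAt s y) i) := by
  have hpow : (0 : ℝ) < 2 ^ s := by positivity
  have hpos : 0 < 2 ^ s * h := by positivity
  have hupdate : cellAt s (y - EuclideanSpace.single i h) =
      Function.update (cellAt s y) i ⌊2 ^ s * y i - 2 ^ s * h⌋ := by
    ext j
    obtain rfl | hj := eq_or_ne j i
    · simp [cellAt_apply, mul_sub]
    · simp [cellAt_apply, hj]
  have hfl := Int.floor_le (2 ^ s * y i)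
  have hlt := Int.lt_floor_add_one (2 ^ s * y i)
  rw [hupdate]
  rcases le_or_gt (⌊2 ^ s * y i⌋ : ℝ) (2 ^ s * y i - 2 ^ s * h) with hcase | hcase
  · left
    rw [Function.update_eq_self_iff, cellAt_apply, Int.floor_eq_iff]
    exact ⟨hcase, by linarith⟩
  · right
    refine ⟨fun j => ?_, congrArg _ ?_⟩
    · have hj := mem_cellSet_iff.1 (rfl : y ∈ cellSet s (cellAt s y)) j
      refine ⟨hj.1, ?_⟩
      split_ifs with hji
      · subst hji
        rw [cellAt_apply, ← mul_lt_mul_iff_right₀ hpow, mul_add, mul_div_cancel₀ _ hpow.ne',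
          mul_inv_cancel_left₀ hpow.ne']
        linarith
      · exact hj.2.trans_eq (by ring)
    · rw [cellAt_apply, Int.floor_eq_iff]
      push_cast
      constructor <;> linarith

lemma integral_indicator_slab (s : ℕ) {h : ℝ} (hh : 0 ≤ h) (i : Fin d) (z : Cell d) (c : ℝ) :
    ∫ y, (slab s h i z).indicator (fun _ => c) y = h * faceArea d s * c := by
  rw [integral_indicator (measurableSet_slab s h i z), setIntegral_const, Measure.real,
    volume_slab s hh, ENNReal.toReal_ofReal (mul_nonneg hh (faceArea_pos d s).le), smul_eq_mul]

lemma integrable_indicator_slab (s : ℕ) {h : ℝ} (hh : 0 ≤ h) (i : Fin d) (z : Cell d) (c : ℝ) :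
    Integrable ((slab s h i z).indicator fun _ => c) :=
  (integrable_indicator_iff (measurableSet_slab s h i z)).2 <| integrableOn_const <| by
    rw [volume_slab s hh]
    exact ENNReal.ofReal_ne_top

lemma abs_integral_sub_single_sub_mul_le (s : ℕ) (U : Cell d → ℝ) {u : Ed d → ℝ}
    (hu1 : ∀ y, |u y| ≤ 1) (i : Fin d) {Z : Finset (Cell d)} (hZ : ∀ y, u y ≠ 0 → cellAt s y ∈ Z)
    {h : ℝ} (hh : 0 < h) (hs : 2 ^ s * h < 1) :
    |∫ y, (U (cellAt s (y - EuclideanSpace.single i h)) - U (cellAt s y)) * u y| ≤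
      h * (faceArea d s * ∑ z ∈ Z, jump U (pred z i, i)) := by
  let χ : Cell d → Ed d → ℝ := fun z => (slab s h i z).indicator fun _ => jump U (pred z i, i)
  have hχ : ∀ z ∈ Z, Integrable (χ z) := fun z _ => integrable_indicator_slab s hh.le i z _
  have hχ0 : ∀ z y, 0 ≤ χ z y := fun z y => Set.indicator_nonneg (fun _ _ => jump_nonneg _ _) _
  have hpoint : ∀ y, ‖(U (cellAt s (y - EuclideanSpace.single i h)) - U (cellAt s y)) * u y‖ ≤
      ∑ z ∈ Z, χ z y := fun y => by
    have hsum0 : 0 ≤ ∑ z ∈ Z, χ z y := Finset.sum_nonneg fun z _ => hχ0 z y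
    obtain hy | hy := eq_or_ne (u y) 0
    · simpa [hy] using hsum0
    obtain hsame | ⟨hslab, hpred⟩ := cellAt_sub_single s hh hs i y
    · simpa [hsame] using hsum0
    · calc ‖(U (cellAt s (y - EuclideanSpace.single i h)) - U (cellAt s y)) * u y‖
          ≤ |U (pred (cellAt s y) i) - U (cellAt s y)| := by
            rw [norm_mul, hpred]
            exact mul_le_of_le_one_right (norm_nonneg _) (hu1 y)
        _ = χ (cellAt s y) y := by
            simp only [χ, Set.indicator_of_mem hslab, jump, shift_pred, abs_sub_comm]
        _ ≤ ∑ z ∈ Z, χ z y := Finset.single_le_sum (fun z _ => hχ0 z y) (hZ y hy)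
  calc |∫ y, (U (cellAt s (y - EuclideanSpace.single i h)) - U (cellAt s y)) * u y|
      ≤ ∫ y, ∑ z ∈ Z, χ z y :=
        norm_integral_le_of_norm_le (integrable_finsetSum _ hχ) (Eventually.of_forall hpoint)
    _ = h * (faceArea d s * ∑ z ∈ Z, jump U (pred z i, i)) := by
        rw [integral_finsetSum _ hχ, Finset.mul_sum, Finset.mul_sum]
        exact Finset.sum_congr rfl fun z _ => by
          rw [integral_indicator_slab s hh.le, mul_assoc]

lemma abs_integral_mul_fderiv_le (s : ℕ) (U : Cell d → ℝ) {u : Ed d → ℝ} (hu : ContDiff ℝ 1 u)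
    (huc : HasCompactSupport u) (hu1 : ∀ y, |u y| ≤ 1) (i : Fin d) {Z : Finset (Cell d)}
    (hZ : ∀ y, u y ≠ 0 → cellAt s y ∈ Z) :
    |∫ y, U (cellAt s y) * fderiv ℝ u y (EuclideanSpace.single i 1)| ≤
      faceArea d s * ∑ z ∈ Z, jump U (pred z i, i) := by
  refine le_of_tendsto (tendsto_inv_mul_integral_sub_mul (locallyIntegrable_comp_cellAt s U) hu huc
    (EuclideanSpace.single i 1)).abs ?_
  filter_upwards [Ioo_mem_nhdsGT (show (0 : ℝ) < (2 ^ s)⁻¹ by positivity)] with h hh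
  have hs : 2 ^ s * h < 1 := (lt_inv_mul_iff₀ (by positivity)).1 (by simpa using hh.2)
  have hsingle : h • (EuclideanSpace.single i 1 : Ed d) = EuclideanSpace.single i h := by
    ext j
    simp
  rw [abs_mul, abs_of_pos (inv_pos.2 hh.1), inv_mul_le_iff₀ hh.1, hsingle]
  exact abs_integral_sub_single_sub_mul_le s U hu1 i hZ hh.1 hs

end Step

/-! ### Test fields -/

section Variation

variable {d : ℕ}

/-- The admissible test fields for the variation in `Ω`. -/
structure IsTestField (Ω : Set (Ed d)) (φ : Ed d → Ed d) : Prop where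
  contDiff : ContDiff ℝ 1 φ
  hasCompactSupport : HasCompactSupport φ
  tsupport_subset : tsupport φ ⊆ Ω
  norm_le_one : ∀ x, ‖φ x‖ ≤ 1

lemma divergence_of_notMem_tsupport {φ : Ed d → Ed d} {y : Ed d} (hy : y ∉ tsupport φ) :
    divergence φ y = 0 := by
  simp [divergence, fderiv_of_notMem_tsupport ℝ hy]

lemma divergence_neg (φ : Ed d → Ed d) (y : Ed d) : divergence (-φ) y = -divergence φ y := by
  simp [divergence, fderiv_neg]

lemma divergence_add {φ ψ : Ed d → Ed d} {y : Ed d} (hφ : DifferentiableAt ℝ φ y)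
    (hψ : DifferentiableAt ℝ ψ y) : divergence (φ + ψ) y = divergence φ y + divergence ψ y := by
  simp only [divergence, fderiv_add hφ hψ, ← Finset.sum_add_distrib]
  rfl

lemma continuous_divergence {φ : Ed d → Ed d} (hφ : ContDiff ℝ 1 φ) :
    Continuous (divergence φ) := by
  have := hφ.continuous_fderiv one_ne_zero
  unfold divergence
  fun_prop

lemma hasCompactSupport_divergence {φ : Ed d → Ed d} (hφ : HasCompactSupport φ) :
    HasCompactSupport (divergence φ) :=
  HasCompactSupport.intro hφ.isCompact fun _ => divergence_of_notMem_tsupport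

lemma integrable_mul_divergence {f : Ed d → ℝ} (hf : LocallyIntegrable f) {φ : Ed d → Ed d}
    (hφ : ContDiff ℝ 1 φ) (hc : HasCompactSupport φ) :
    Integrable fun y => f y * divergence φ y :=
  hf.integrable_smul_right_of_hasCompactSupport (continuous_divergence hφ)
    (hasCompactSupport_divergence hc)

lemma var_eq_iSup (Ω : Set (Ed d)) (f : Ed d → ℝ) :
    var Ω f = ⨆ (φ) (_ : IsTestField Ω φ), ENNReal.ofReal (∫ y, f y * divergence φ y) := by
  refine iSup_congr fun φ => iSup_congr_Prop
    ⟨fun h => ⟨h.1, h.2.1, h.2.2.1, h.2.2.2⟩, fun h => ⟨h.1, h.2, h.3, h.4⟩⟩ fun h =>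
      congrArg ENNReal.ofReal <| setIntegral_eq_integral_of_forall_compl_eq_zero fun y hy => ?_
  rw [divergence_of_notMem_tsupport fun hmem => hy (h.tsupport_subset hmem), mul_zero]

lemma ofReal_le_var {Ω : Set (Ed d)} {φ : Ed d → Ed d} (hφ : IsTestField Ω φ) (f : Ed d → ℝ) :
    ENNReal.ofReal (∫ y, f y * divergence φ y) ≤ var Ω f := by
  rw [var_eq_iSup]
  exact le_iSup₂ (f := fun φ (_ : IsTestField Ω φ) => ENNReal.ofReal (∫ y, f y * divergence φ y))
    φ hφ

lemma IsTestField.neg {Ω : Set (Ed d)} {φ : Ed d → Ed d} (hφ : IsTestField Ω φ) :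
    IsTestField Ω (-φ) where
  contDiff := hφ.contDiff.neg
  hasCompactSupport := hφ.hasCompactSupport.neg
  tsupport_subset := by
    rw [tsupport, Function.support_neg]
    exact hφ.tsupport_subset
  norm_le_one x := by simpa using hφ.norm_le_one x

lemma ofReal_abs_le_var {Ω : Set (Ed d)} {φ : Ed d → Ed d} (hφ : IsTestField Ω φ)
    (f : Ed d → ℝ) : ENNReal.ofReal |∫ y, f y * divergence φ y| ≤ var Ω f := by
  rcases abs_choice (∫ y, f y * divergence φ y) with h | h
  · rw [h]
    exact ofReal_le_var hφ f
  · rw [h, ← integral_neg]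
    simpa [divergence_neg] using ofReal_le_var hφ.neg f

lemma IsTestField.mono {A Ω : Set (Ed d)} (h : A ⊆ Ω) {φ : Ed d → Ed d} (hφ : IsTestField A φ) :
    IsTestField Ω φ :=
  { hφ with tsupport_subset := hφ.tsupport_subset.trans h }

lemma isTestField_zero (Ω : Set (Ed d)) : IsTestField Ω (0 : Ed d → Ed d) where
  contDiff := contDiff_const
  hasCompactSupport := HasCompactSupport.zero
  tsupport_subset := by simp [tsupport]
  norm_le_one := by simp

lemma IsTestField.eq_zero_of_notMem {Ω : Set (Ed d)} {φ : Ed d → Ed d} (hφ : IsTestField Ω φ)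
    {y : Ed d} (hy : y ∉ Ω) : φ y = 0 :=
  image_eq_zero_of_notMem_tsupport fun h => hy (hφ.tsupport_subset h)

lemma IsTestField.add {A B Ω : Set (Ed d)} (hA : A ⊆ Ω) (hB : B ⊆ Ω) (hAB : Disjoint A B)
    {φ ψ : Ed d → Ed d} (hφ : IsTestField A φ) (hψ : IsTestField B ψ) :
    IsTestField Ω (φ + ψ) where
  contDiff := hφ.contDiff.add hψ.contDiff
  hasCompactSupport := hφ.hasCompactSupport.add hψ.hasCompactSupport
  tsupport_subset := (tsupport_add _ _).trans
    (Set.union_subset (hφ.tsupport_subset.trans hA) (hψ.tsupport_subset.trans hB))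
  norm_le_one y := by
    by_cases hy : y ∈ A
    · simpa [hψ.eq_zero_of_notMem (Set.disjoint_left.1 hAB hy)] using hφ.norm_le_one y
    · simpa [hφ.eq_zero_of_notMem hy] using hψ.norm_le_one y

lemma var_add_var_le {A B Ω : Set (Ed d)} (hA : A ⊆ Ω) (hB : B ⊆ Ω) (hAB : Disjoint A B)
    {f : Ed d → ℝ} (hf : LocallyIntegrable f) : var A f + var B f ≤ var Ω f := by
  rw [var_eq_iSup A, var_eq_iSup B]
  refine ENNReal.biSup_add_biSup_le' ⟨0, isTestField_zero A⟩ ⟨0, isTestField_zero B⟩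
    fun φ hφ ψ hψ => ?_
  rcases le_or_gt (∫ y, f y * divergence φ y) 0 with hφ0 | hφ0
  · rw [ENNReal.ofReal_of_nonpos hφ0, zero_add]
    exact ofReal_le_var (hψ.mono hB) f
  rcases le_or_gt (∫ y, f y * divergence ψ y) 0 with hψ0 | hψ0
  · rw [ENNReal.ofReal_of_nonpos hψ0, add_zero]
    exact ofReal_le_var (hφ.mono hA) f
  rw [← ENNReal.ofReal_add hφ0.le hψ0.le,
    ← integral_add (integrable_mul_divergence hf hφ.contDiff hφ.hasCompactSupport)
      (integrable_mul_divergence hf hψ.contDiff hψ.hasCompactSupport)]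
  refine le_of_eq_of_le ?_ (ofReal_le_var (hφ.add hA hB hAB hψ) f)
  simp_rw [divergence_add (hφ.contDiff.differentiable one_ne_zero _)
    (hψ.contDiff.differentiable one_ne_zero _), mul_add]

lemma sum_var_le {ι : Type*} {s : Finset ι} {A : ι → Set (Ed d)} {Ω : Set (Ed d)}
    (hA : ∀ k ∈ s, A k ⊆ Ω) (hdisj : (s : Set ι).PairwiseDisjoint A)
    {f : Ed d → ℝ} (hf : LocallyIntegrable f) : ∑ k ∈ s, var (A k) f ≤ var Ω f := by
  classical
  induction s using Finset.induction_on generalizing Ω with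
  | empty => simp
  | insert k s hk ih =>
    rw [Finset.sum_insert hk]
    have hs : ∑ j ∈ s, var (A j) f ≤ var (⋃ j ∈ s, A j) f :=
      ih (fun j hj => Set.subset_biUnion_of_mem (u := A) hj) (hdisj.subset (by simp))
    refine (add_le_add le_rfl hs).trans (var_add_var_le (hA k (by simp))
      (Set.iUnion₂_subset fun j hj => hA j (by simp [hj])) ?_ hf)
    rw [Set.disjoint_iUnion₂_right]
    exact fun j hj => hdisj (by simp) (by simp [hj]) (ne_of_mem_of_not_mem hj hk).symm

/-! ### Test fields adapted to pairs of adjacent cells -/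

/-- Smooth functions supported inside the unit interval which increase to its indicator. -/
def bump (n : ℕ) (t : ℝ) : ℝ :=
  Real.smoothTransition (n * t - 1) * Real.smoothTransition (n * (1 - t) - 1)

/-- The primitive of `bump n t - bump n (t - 1)` with compact support, a profile of height at most
one that rises over the unit interval and descends over the next one. -/
def tent (n : ℕ) (t : ℝ) : ℝ := ∫ r in (t - 1)..t, bump n r

lemma contDiff_bump (n : ℕ) : ContDiff ℝ 1 (bump n) := by
  have := Real.smoothTransition.contDiff (n := 1)
  unfold bump
  exact (this.comp (by fun_prop)).mul (this.comp (by fun_prop))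

lemma intervalIntegrable_bump (n : ℕ) (a b : ℝ) : IntervalIntegrable (bump n) volume a b :=
  (contDiff_bump n).continuous.intervalIntegrable a b

lemma bump_nonneg (n : ℕ) (t : ℝ) : 0 ≤ bump n t :=
  mul_nonneg (Real.smoothTransition.nonneg _) (Real.smoothTransition.nonneg _)

lemma bump_le_one (n : ℕ) (t : ℝ) : bump n t ≤ 1 :=
  mul_le_one₀ (Real.smoothTransition.le_one _) (Real.smoothTransition.nonneg _)
    (Real.smoothTransition.le_one _)

lemma one_lt_of_bump_ne_zero {n : ℕ} {t : ℝ} (h : bump n t ≠ 0) :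
    1 < n * t ∧ 1 < n * (1 - t) := by
  obtain ⟨hleft, hright⟩ := mul_ne_zero_iff.1 h
  constructor <;> by_contra! hle
  · exact hleft (Real.smoothTransition.zero_of_nonpos (by linarith))
  · exact hright (Real.smoothTransition.zero_of_nonpos (by linarith))

lemma bump_eq_zero (n : ℕ) {t : ℝ} (h : t ∉ Ioo (0 : ℝ) 1) : bump n t = 0 := by
  by_contra hne
  obtain ⟨hleft, hright⟩ := one_lt_of_bump_ne_zero hne
  exact h ⟨pos_of_mul_pos_right (one_pos.trans hleft) n.cast_nonneg,
    sub_pos.1 (pos_of_mul_pos_right (one_pos.trans hright) n.cast_nonneg)⟩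

lemma tendsto_bump {t : ℝ} (h : t ∈ Ioo (0 : ℝ) 1) : Tendsto (fun n => bump n t) atTop (𝓝 1) := by
  have heventually : ∀ r : ℝ, 0 < r → ∀ᶠ n : ℕ in atTop,
      Real.smoothTransition (n * r - 1) = 1 := fun r hr => by
    filter_upwards [(tendsto_natCast_atTop_atTop.atTop_mul_const hr).eventually_ge_atTop 2]
      with n hn
    exact Real.smoothTransition.one_of_one_le (by linarith)
  refine tendsto_const_nhds.congr' ?_
  filter_upwards [heventually t h.1, heventually (1 - t) (sub_pos.2 h.2)] with n hleft hright
  rw [bump, hleft, hright, one_mul]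

lemma hasDerivAt_tent (n : ℕ) (t : ℝ) : HasDerivAt (tent n) (bump n t - bump n (t - 1)) t := by
  have hc := (contDiff_bump n).continuous
  have hprim : ∀ t, HasDerivAt (fun t => ∫ r in (0 : ℝ)..t, bump n r) (bump n t) t := fun t =>
    intervalIntegral.integral_hasDerivAt_right (intervalIntegrable_bump n _ _)
      (hc.stronglyMeasurableAtFilter _ _) hc.continuousAt
  have htent : tent n =
      fun t => (∫ r in (0 : ℝ)..t, bump n r) - ∫ r in (0 : ℝ)..(t - 1), bump n r :=
    funext fun t => (intervalIntegral.integral_interval_sub_left (intervalIntegrable_bump n _ _)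
      (intervalIntegrable_bump n _ _)).symm
  rw [htent]
  exact (hprim t).sub ((hprim (t - 1)).comp_sub_const t 1)

lemma contDiff_tent (n : ℕ) : ContDiff ℝ 1 (tent n) := by
  have hc := (contDiff_bump n).continuous
  rw [contDiff_one_iff_deriv, funext fun t => (hasDerivAt_tent n t).deriv]
  exact ⟨fun t => (hasDerivAt_tent n t).differentiableAt, by fun_prop⟩

lemma tent_nonneg (n : ℕ) (t : ℝ) : 0 ≤ tent n t :=
  intervalIntegral.integral_nonneg (by linarith) fun r _ => bump_nonneg n r

lemma tent_le_one (n : ℕ) (t : ℝ) : tent n t ≤ 1 := by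
  have h := intervalIntegral.integral_mono_on (a := t - 1) (b := t) (μ := volume) (by linarith)
    (intervalIntegrable_bump n _ _)
    (continuous_const.intervalIntegrable (_ : ℝ) _) fun r _ => bump_le_one n r
  simpa [tent] using h

lemma one_le_of_tent_ne_zero {n : ℕ} {t : ℝ} (h : tent n t ≠ 0) :
    1 ≤ n * t ∧ 1 ≤ n * (2 - t) := by
  obtain ⟨r, hr, hne⟩ : ∃ r ∈ Icc (t - 1) t, bump n r ≠ 0 := by
    by_contra! hzero
    rw [← uIcc_of_le (by linarith)] at hzero
    exact h ((intervalIntegral.integral_congr hzero).trans intervalIntegral.integral_zero)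
  obtain ⟨hleft, hright⟩ := one_lt_of_bump_ne_zero hne
  exact ⟨hleft.le.trans (mul_le_mul_of_nonneg_left hr.2 n.cast_nonneg),
    hright.le.trans (mul_le_mul_of_nonneg_left (by linarith [hr.1]) n.cast_nonneg)⟩

/-- The interior of the union of the two cells of side `2 ^ (-s)` joined by the edge `e`. -/
def edgeBox (s : ℕ) (e : Edge d) : Set (Ed d) :=
  {y | ∀ j, 2 ^ s * y j - e.1 j ∈ Ioo (0 : ℝ) (if j = e.2 then 2 else 1)}

lemma cellAt_of_mem_edgeBox {s : ℕ} {e : Edge d} {y : Ed d} (hy : y ∈ edgeBox s e) :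
    cellAt s y = e.1 ∨ cellAt s y = shift e.1 e.2 := by
  have hdir := hy e.2
  have hperp : ∀ j ≠ e.2, cellAt s y j = e.1 j := fun j hj => by
    have h := hy j
    rw [if_neg hj, mem_Ioo] at h
    rw [cellAt_apply, Int.floor_eq_iff]
    constructor <;> linarith
  rw [if_pos rfl, mem_Ioo] at hdir
  rw [shift, Function.eq_update_iff]
  rcases lt_or_ge (2 ^ s * y e.2) (e.1 e.2 + 1) with hlt | hge
  · refine .inl (funext fun j => ?_)
    obtain rfl | hj := eq_or_ne j e.2
    · rw [cellAt_apply, Int.floor_eq_iff]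
      constructor <;> linarith
    · exact hperp j hj
  · refine .inr ⟨?_, hperp⟩
    rw [cellAt_apply, Int.floor_eq_iff]
    push_cast
    constructor <;> linarith

lemma abs_sub_le_one_of_endpoints {e : Edge d} {x y : Cell d} (hx : x = e.1 ∨ x = shift e.1 e.2)
    (hy : y = e.1 ∨ y = shift e.1 e.2) (j : Fin d) : |x j - y j| ≤ 1 := by
  rcases hx with rfl | rfl <;> rcases hy with rfl | rfl <;>
    obtain rfl | hj := eq_or_ne j e.2 <;> simp [shift, *]

lemma isBounded_edgeBox (s : ℕ) (e : Edge d) : Bornology.IsBounded (edgeBox s e) :=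
  Metric.isBounded_iff.2 ⟨_, fun _ hy _ hz => dist_le_of_abs_cellAt_sub_le
    (abs_sub_le_one_of_endpoints (cellAt_of_mem_edgeBox hy) (cellAt_of_mem_edgeBox hz))⟩

/-- A smooth approximation of the indicator of the cell `x` of side `2 ^ (-s)`. -/
def cellBump (s n : ℕ) (x : Cell d) (y : Ed d) : ℝ := ∏ j, bump n (2 ^ s * y j - x j)

/-- The factor of `cellBump` in the directions perpendicular to the edge `e`. -/
def faceBump (s n : ℕ) (e : Edge d) (y : Ed d) : ℝ :=
  ∏ j ∈ Finset.univ.erase e.2, bump n (2 ^ s * y j - e.1 j)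

/-- A function supported in `edgeBox s e` whose derivative in the direction of `e` is a difference
of cell bumps. -/
def edgeBump (s n : ℕ) (e : Edge d) (y : Ed d) : ℝ :=
  tent n (2 ^ s * y e.2 - e.1 e.2) * faceBump s n e y

lemma bump_mul_faceBump (s n : ℕ) (e : Edge d) (y : Ed d) :
    bump n (2 ^ s * y e.2 - e.1 e.2) * faceBump s n e y = cellBump s n e.1 y :=
  Finset.mul_prod_erase _ (fun j => bump n (2 ^ s * y j - e.1 j)) (Finset.mem_univ e.2)

lemma faceBump_shift (s n : ℕ) (e : Edge d) (y : Ed d) :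
    faceBump s n (shift e.1 e.2, e.2) y = faceBump s n e y :=
  Finset.prod_congr rfl fun j hj => by simp [shift, Finset.ne_of_mem_erase hj]

lemma faceBump_add_smul_single (s n : ℕ) (e : Edge d) (y : Ed d) (t : ℝ) :
    faceBump s n e (y + t • EuclideanSpace.single e.2 1) = faceBump s n e y :=
  Finset.prod_congr rfl fun j hj => by simp [Finset.ne_of_mem_erase hj]

lemma faceBump_nonneg (s n : ℕ) (e : Edge d) (y : Ed d) : 0 ≤ faceBump s n e y :=
  Finset.prod_nonneg fun _ _ => bump_nonneg _ _

lemma faceBump_le_one (s n : ℕ) (e : Edge d) (y : Ed d) : faceBump s n e y ≤ 1 :=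
  Finset.prod_le_one (fun _ _ => bump_nonneg _ _) fun _ _ => bump_le_one _ _

lemma abs_cellBump_le_one (s n : ℕ) (x : Cell d) (y : Ed d) : |cellBump s n x y| ≤ 1 :=
  (abs_of_nonneg (Finset.prod_nonneg fun _ _ => bump_nonneg _ _)).trans_le
    (Finset.prod_le_one (fun _ _ => bump_nonneg _ _) fun _ _ => bump_le_one _ _)

lemma abs_edgeBump_le_one (s n : ℕ) (e : Edge d) (y : Ed d) : |edgeBump s n e y| ≤ 1 :=
  (abs_of_nonneg (mul_nonneg (tent_nonneg _ _) (faceBump_nonneg s n e y))).trans_le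
    (mul_le_one₀ (tent_le_one _ _) (faceBump_nonneg s n e y) (faceBump_le_one s n e y))

lemma continuous_cellBump (s n : ℕ) (x : Cell d) : Continuous (cellBump s n x) := by
  have := (contDiff_bump n).continuous
  unfold cellBump
  fun_prop

lemma contDiff_edgeBump (s n : ℕ) (e : Edge d) : ContDiff ℝ 1 (edgeBump s n e) := by
  have hcoord : ∀ j, ContDiff ℝ 1 fun y : Ed d => 2 ^ s * y j - e.1 j := fun j => by fun_prop
  exact ((contDiff_tent n).comp (hcoord e.2)).mul
    (contDiff_prod fun j _ => (contDiff_bump n).comp (hcoord j))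

lemma fderiv_edgeBump (s n : ℕ) (e : Edge d) (y : Ed d) :
    fderiv ℝ (edgeBump s n e) y (EuclideanSpace.single e.2 1) =
      2 ^ s * (cellBump s n e.1 y - cellBump s n (shift e.1 e.2) y) := by
  rw [← ((contDiff_edgeBump s n e).differentiable one_ne_zero y).lineDeriv_eq_fderiv]
  refine HasLineDerivAt.lineDeriv ?_
  have hline : ∀ t : ℝ, edgeBump s n e (y + t • EuclideanSpace.single e.2 1) =
      tent n (2 ^ s * (y e.2 + t) - e.1 e.2) * faceBump s n e y := fun t => by
    simp [edgeBump, faceBump_add_smul_single]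
  have hinner : HasDerivAt (fun t : ℝ => 2 ^ s * (y e.2 + t) - (e.1 e.2 : ℝ)) (2 ^ s) 0 := by
    simpa using (((hasDerivAt_id (0 : ℝ)).const_add (y e.2)).const_mul ((2 : ℝ) ^ s)).sub_const
      (e.1 e.2 : ℝ)
  unfold HasLineDerivAt
  simp_rw [hline]
  refine (((hasDerivAt_tent n _).comp (0 : ℝ) hinner).mul_const _).congr_deriv ?_
  rw [← bump_mul_faceBump s n e, ← bump_mul_faceBump s n (shift e.1 e.2, e.2), faceBump_shift,
    add_zero, sub_sub]
  simp only [shift, Function.update_self, Int.cast_add, Int.cast_one]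
  ring

lemma tsupport_edgeBump_subset (s n : ℕ) (e : Edge d) :
    tsupport (edgeBump s n e) ⊆ edgeBox s e := by
  let K : Set (Ed d) := {y | ∀ j, 1 ≤ n * (2 ^ s * y j - e.1 j) ∧
    1 ≤ n * ((if j = e.2 then 2 else 1) - (2 ^ s * y j - e.1 j))}
  have hK : IsClosed K := by
    simp only [K, Set.ofPred_forall, Set.ofPred_and]
    refine isClosed_iInter fun j => (isClosed_le ?_ ?_).inter (isClosed_le ?_ ?_) <;> fun_prop
  have hsupp : Function.support (edgeBump s n e) ⊆ K := fun y hy j => by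
    obtain ⟨htent, hface⟩ := mul_ne_zero_iff.1 hy
    obtain rfl | hj := eq_or_ne j e.2
    · simpa using one_le_of_tent_ne_zero htent
    · have hbump := one_lt_of_bump_ne_zero
        (Finset.prod_ne_zero_iff.1 hface j (Finset.mem_erase.2 ⟨hj, Finset.mem_univ j⟩))
      simpa [hj] using ⟨hbump.1.le, hbump.2.le⟩
  refine (closure_minimal hsupp hK).trans fun y hy j => ?_
  exact ⟨pos_of_mul_pos_right (one_pos.trans_le (hy j).1) n.cast_nonneg,
    sub_pos.1 (pos_of_mul_pos_right (one_pos.trans_le (hy j).2) n.cast_nonneg)⟩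

/-- The vector field with `i`-th component `u` and all other components zero. -/
def coordField (u : Ed d → ℝ) (i : Fin d) (y : Ed d) : Ed d := u y • EuclideanSpace.single i 1

lemma divergence_coordField {u : Ed d → ℝ} (hu : Differentiable ℝ u) (i : Fin d) (y : Ed d) :
    divergence (coordField u i) y = fderiv ℝ u y (EuclideanSpace.single i 1) := by
  have hfderiv : fderiv ℝ (coordField u i) y =
      (fderiv ℝ u y).smulRight (EuclideanSpace.single i 1) :=
    ((hu y).hasFDerivAt.smul_const _).fderiv
  rw [divergence, hfderiv, Finset.sum_eq_single i (fun j _ hj => by simp [hj.symm]) (by simp)]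
  simp

lemma isTestField_coordField {Ω : Set (Ed d)} {u : Ed d → ℝ} (hu : ContDiff ℝ 1 u)
    (huc : HasCompactSupport u) (huΩ : tsupport u ⊆ Ω) (hu1 : ∀ y, |u y| ≤ 1) (i : Fin d) :
    IsTestField Ω (coordField u i) where
  contDiff := hu.smul contDiff_const
  hasCompactSupport := huc.smul_right
  tsupport_subset := (tsupport_smul_subset_left u _).trans huΩ
  norm_le_one y := by simpa [coordField, norm_smul] using hu1 y

lemma isTestField_edgeBump (s n : ℕ) (e : Edge d) :
    IsTestField (edgeBox s e) (coordField (edgeBump s n e) e.2) :=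
  isTestField_coordField (contDiff_edgeBump s n e)
    (Metric.isCompact_of_isClosed_isBounded (isClosed_tsupport _)
      ((isBounded_edgeBox s e).subset (tsupport_edgeBump_subset s n e)))
    (tsupport_edgeBump_subset s n e) (abs_edgeBump_le_one s n e) e.2

lemma ae_apply_ne (j : Fin d) (c : ℝ) : ∀ᵐ y : Ed d, y j ≠ c := by
  exact (EuclideanSpace.volume_preserving_symm_measurableEquiv_toLp
    (Fin d)).quasiMeasurePreserving.ae (Measure.ae_eval_ne (μ := fun _ : Fin d => volume) j c)

lemma ae_two_pow_mul_apply_sub_ne_zero (s : ℕ) (x : Cell d) :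
    ∀ᵐ y : Ed d, ∀ j, 2 ^ s * y j - x j ≠ 0 := by
  refine ae_all_iff.2 fun j => ?_
  filter_upwards [ae_apply_ne j (x j / 2 ^ s)] with y hy hzero
  refine hy ((eq_div_iff (by positivity)).2 ?_)
  linarith

lemma tendsto_cellBump {s : ℕ} {x : Cell d} {y : Ed d} (hy : ∀ j, 2 ^ s * y j - x j ≠ 0) :
    Tendsto (fun n => cellBump s n x y) atTop (𝓝 ((cellSet s x).indicator 1 y)) := by
  have hmem : y ∈ cellSet s x ↔ ∀ j, 2 ^ s * y j - x j ∈ Ioo (0 : ℝ) 1 := by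
    rw [mem_cellSet, funext_iff]
    refine forall_congr' fun j => ?_
    rw [cellAt_apply, Int.floor_eq_iff, mem_Ioo, sub_pos, sub_lt_iff_lt_add',
      le_iff_lt_or_eq, or_iff_left (sub_ne_zero.1 (hy j)).symm]
  by_cases h : y ∈ cellSet s x
  · rw [Set.indicator_of_mem h, Pi.one_apply,
      ← Finset.prod_const_one (ι := Fin d) (s := Finset.univ)]
    exact tendsto_finsetProd _ fun j _ => tendsto_bump (hmem.1 h j)
  · rw [Set.indicator_of_notMem h]
    obtain ⟨j, hj⟩ := not_forall.1 (mt hmem.2 h)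
    exact tendsto_const_nhds.congr fun n =>
      (Finset.prod_eq_zero (Finset.mem_univ j) (bump_eq_zero n hj)).symm

lemma tendsto_integral_mul_cellBump {f : Ed d → ℝ} (hf : Integrable f) (s : ℕ) (x : Cell d) :
    Tendsto (fun n => ∫ y, f y * cellBump s n x y) atTop (𝓝 (∫ y in cellSet s x, f y)) := by
  rw [← integral_indicator (measurableSet_cellSet s x)]
  refine tendsto_integral_of_dominated_convergence (fun y => |f y|)
    (fun n => hf.aestronglyMeasurable.mul (continuous_cellBump s n x).aestronglyMeasurable) hf.abs
    (fun n => Eventually.of_forall fun y => ?_) ?_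
  · rw [norm_mul]
    exact mul_le_of_le_one_right (norm_nonneg _) (abs_cellBump_le_one s n x y)
  · filter_upwards [ae_two_pow_mul_apply_sub_ne_zero s x] with y hy
    have hind : (cellSet s x).indicator f y = f y * (cellSet s x).indicator 1 y := by
      classical simp [Set.indicator_apply]
    rw [hind]
    exact (tendsto_cellBump hy).const_mul (f y)

lemma integral_mul_divergence_edgeBump {f : Ed d → ℝ} (hf : Integrable f) (s n : ℕ) (e : Edge d) :
    ∫ y, f y * divergence (coordField (edgeBump s n e) e.2) y =
      2 ^ s * ((∫ y, f y * cellBump s n e.1 y) - ∫ y, f y * cellBump s n (shift e.1 e.2) y) := by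
  have hint : ∀ x, Integrable fun y => f y * cellBump s n x y := fun x =>
    hf.mul_bdd (continuous_cellBump s n x).aestronglyMeasurable
      (Eventually.of_forall (abs_cellBump_le_one s n x))
  rw [← integral_sub (hint _) (hint _), ← integral_const_mul]
  refine integral_congr_ae (Eventually.of_forall fun y => ?_)
  simp only [divergence_coordField ((contDiff_edgeBump s n e).differentiable one_ne_zero),
    fderiv_edgeBump]
  ring

lemma ofReal_jump_le_var {f : Ed d → ℝ} (hf : Integrable f) (s : ℕ) (e : Edge d) :
    ENNReal.ofReal (faceArea d s * jump (cellAvg s f) e) ≤ var (edgeBox s e) f := by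
  have hlim := ((tendsto_integral_mul_cellBump hf s e.1).sub
    (tendsto_integral_mul_cellBump hf s (shift e.1 e.2))).const_mul ((2 : ℝ) ^ s)
  simp_rw [← integral_mul_divergence_edgeBump hf] at hlim
  have hjump : faceArea d s * jump (cellAvg s f) e =
      |2 ^ s * ((∫ y in cellSet s e.1, f y) - ∫ y in cellSet s (shift e.1 e.2), f y)| := by
    rw [jump, abs_sub_comm, cellAvg_eq, cellAvg_eq, ← mul_sub, abs_mul, abs_mul, faceArea,
      abs_of_pos (by positivity : (0 : ℝ) < (2 ^ s) ^ d),
      abs_of_pos (by positivity : (0 : ℝ) < 2 ^ s), ← mul_assoc,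
      div_mul_cancel₀ _ (by positivity)]
  rw [hjump]
  exact le_of_tendsto ((ENNReal.continuous_ofReal.tendsto _).comp hlim.abs)
    (Eventually.of_forall fun n => ofReal_abs_le_var (isTestField_edgeBump s n e) f)

/-! ### Jumps and variation -/

lemma disjoint_edgeBox (s : ℕ) {e e' : Edge d} (hdir : e.2 = e'.2)
    (hpar : e.1 e.2 % 2 = e'.1 e'.2 % 2) (hne : e ≠ e') :
    Disjoint (edgeBox s e) (edgeBox s e') := by
  refine Set.disjoint_left.2 fun y hy hy' => hne (Prod.ext (funext fun j => ?_) hdir)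
  have hj := hy j
  have hj' := hy' j
  have hlt : ∀ (a b : ℤ) (r : ℕ), 2 ^ s * y j - a ∈ Ioo (0 : ℝ) r →
      2 ^ s * y j - b ∈ Ioo (0 : ℝ) r → b - a < r := fun a b r ha hb => by
    have := sub_pos.1 hb.1
    exact_mod_cast (by linarith [ha.2] : (b : ℝ) - a < r)
  rw [← hdir] at hj' hpar
  obtain rfl | hjdir := eq_or_ne j e.2
  · rw [if_pos rfl, ← Nat.cast_ofNat] at hj hj'
    have := hlt _ _ _ hj hj'
    have := hlt _ _ _ hj' hj
    lia
  · rw [if_neg hjdir, ← Nat.cast_one] at hj hj'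
    have := hlt _ _ _ hj hj'
    have := hlt _ _ _ hj' hj
    lia

-- For each direction and parity the boxes are pairwise disjoint, so `2 * d` families suffice.
lemma ofReal_faceArea_mul_edgeVar_le {f : Ed d → ℝ} (hf : Integrable f) (s : ℕ)
    {𝓔 : Finset (Edge d)} {Ω : Set (Ed d)} (h : ∀ e ∈ 𝓔, edgeBox s e ⊆ Ω) :
    ENNReal.ofReal (faceArea d s * edgeVar 𝓔 (cellAvg s f)) ≤ 2 * d * var Ω f := by
  let directionParity : Edge d → Fin d × Bool := fun e => (e.2, decide (e.1 e.2 % 2 = 0))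
  have hfamily : ∀ c, ∑ e ∈ 𝓔 with directionParity e = c, var (edgeBox s e) f ≤ var Ω f :=
    fun c => sum_var_le (fun e he => h e (Finset.mem_filter.1 he).1) (fun e he e' he' hne => by
      have hc := (Finset.mem_filter.1 he).2.trans (Finset.mem_filter.1 he').2.symm
      rw [Prod.mk.injEq, decide_eq_decide] at hc
      exact disjoint_edgeBox s hc.1 (by lia) hne) hf.locallyIntegrable
  calc ENNReal.ofReal (faceArea d s * edgeVar 𝓔 (cellAvg s f))
      = ∑ e ∈ 𝓔, ENNReal.ofReal (faceArea d s * jump (cellAvg s f) e) := by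
        rw [edgeVar, Finset.mul_sum, ENNReal.ofReal_sum_of_nonneg fun e _ =>
          mul_nonneg (faceArea_pos d s).le (jump_nonneg _ e)]
    _ ≤ ∑ e ∈ 𝓔, var (edgeBox s e) f := Finset.sum_le_sum fun e _ => ofReal_jump_le_var hf s e
    _ = ∑ c, ∑ e ∈ 𝓔 with directionParity e = c, var (edgeBox s e) f :=
        (Finset.sum_fiberwise 𝓔 directionParity _).symm
    _ ≤ ∑ _c : Fin d × Bool, var Ω f := Finset.sum_le_sum fun c _ => hfamily c
    _ = 2 * d * var Ω f := by simp [mul_comm]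

lemma isOpen_edgeBox (s : ℕ) (e : Edge d) : IsOpen (edgeBox s e) := by
  simp only [edgeBox, Set.ofPred_forall]
  exact isOpen_iInter_of_finite fun j => isOpen_Ioo.preimage (by fun_prop)

lemma edgeBox_subset_interior_cubeSet (s : ℕ) {Q : GridCube d} {e : Edge d} (he : e ∈ Q.edges) :
    edgeBox s e ⊆ interior (cubeSet s Q) := by
  refine interior_maximal (fun y hy => ?_) (isOpen_edgeBox s e)
  obtain ⟨hlower, hupper⟩ := GridCube.mem_edges.1 he
  rcases cellAt_of_mem_edgeBox hy with h | h
  · exact Finset.mem_coe.2 (h ▸ hlower)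
  · exact Finset.mem_coe.2 (h ▸ hupper)

lemma eventually_edgeBox_subset {Ω K : Set (Ed d)} (hΩ : IsOpen Ω) (hK : IsCompact K)
    (h : K ⊆ Ω) :
    ∀ᶠ s in atTop, ∀ y ∈ K, ∀ e : Edge d, shift e.1 e.2 = cellAt s y → edgeBox s e ⊆ Ω := by
  obtain ⟨δ, hδ, hsub⟩ := hK.exists_cthickening_subset_open hΩ h
  filter_upwards [(tendsto_const_mul_inv_two_pow (d * (1 + 1))).eventually_le_const hδ]
    with s hs y hy e he w hw
  refine hsub (mem_cthickening_of_dist_le w y δ K hy ((dist_le_of_abs_cellAt_sub_le (s := s)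
    (abs_sub_le_one_of_endpoints (cellAt_of_mem_edgeBox hw) (.inr he.symm))).trans ?_))
  rwa [Int.cast_one, ← mul_assoc]

/-- The edges whose upper endpoint lies in `Z`. -/
def lowerEdges (Z : Finset (Cell d)) : Finset (Edge d) :=
  (Z ×ˢ Finset.univ).image fun p => (pred p.1 p.2, p.2)

lemma shift_mem_of_mem_lowerEdges {Z : Finset (Cell d)} {e : Edge d} (he : e ∈ lowerEdges Z) :
    shift e.1 e.2 ∈ Z := by
  obtain ⟨⟨z, i⟩, hz, rfl⟩ := Finset.mem_image.1 he
  rw [shift_pred]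
  exact (Finset.mem_product.1 hz).1

lemma edgeVar_lowerEdges (Z : Finset (Cell d)) (U : Cell d → ℝ) :
    edgeVar (lowerEdges Z) U = ∑ i, ∑ z ∈ Z, jump U (pred z i, i) := by
  have hinj : Function.Injective fun p : Cell d × Fin d => (pred p.1 p.2, p.2) := by
    rintro ⟨z, i⟩ ⟨z', i'⟩ h
    obtain ⟨h, rfl⟩ := Prod.mk.inj h
    exact Prod.ext (by simpa only [shift_pred] using congrArg (shift · i) h) rfl
  rw [edgeVar, lowerEdges, Finset.sum_image hinj.injOn, Finset.sum_product_right]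

lemma fderiv_apply_coord {φ : Ed d → Ed d} {y : Ed d} (hφ : DifferentiableAt ℝ φ y) (i : Fin d)
    (v : Ed d) : fderiv ℝ (fun y => φ y i) y v = fderiv ℝ φ y v i :=
  congrArg (· v) ((EuclideanSpace.proj i : Ed d →L[ℝ] ℝ).hasFDerivAt.comp y
    hφ.hasFDerivAt).fderiv

lemma abs_integral_comp_cellAt_mul_divergence_le (s : ℕ) (U : Cell d → ℝ) {Ω : Set (Ed d)}
    {φ : Ed d → Ed d} (hφ : IsTestField Ω φ) {Z : Finset (Cell d)}
    (hZ : ∀ y ∈ tsupport φ, cellAt s y ∈ Z) :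
    |∫ y, U (cellAt s y) * divergence φ y| ≤ faceArea d s * edgeVar (lowerEdges Z) U := by
  have hu : ∀ i, ContDiff ℝ 1 fun y => φ y i := fun i => by
    have := hφ.contDiff
    fun_prop
  have huc : ∀ i, HasCompactSupport fun y => φ y i := fun i =>
    hφ.hasCompactSupport.comp_left (g := fun v : Ed d => v i) rfl
  have hint : ∀ i, Integrable fun y =>
      U (cellAt s y) * fderiv ℝ (fun y => φ y i) y (EuclideanSpace.single i 1) := fun i =>
    (locallyIntegrable_comp_cellAt s U).integrable_smul_right_of_hasCompactSupport
      (((hu i).continuous_fderiv one_ne_zero).clm_apply continuous_const)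
      (((huc i).fderiv ℝ).comp_left (g := fun L : Ed d →L[ℝ] ℝ => L (EuclideanSpace.single i 1))
        rfl)
  have hsum : ∫ y, U (cellAt s y) * divergence φ y =
      ∑ i, ∫ y, U (cellAt s y) * fderiv ℝ (fun y => φ y i) y (EuclideanSpace.single i 1) := by
    rw [← integral_finsetSum _ fun i _ => hint i]
    simp_rw [divergence, Finset.mul_sum,
      fderiv_apply_coord (hφ.contDiff.differentiable one_ne_zero _)]
  rw [hsum, edgeVar_lowerEdges, Finset.mul_sum]
  refine (Finset.abs_sum_le_sum_abs _ _).trans (Finset.sum_le_sum fun i _ =>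
    abs_integral_mul_fderiv_le s U (hu i) (huc i)
      (fun y => (PiLp.norm_apply_le (φ y) i).trans (hφ.norm_le_one y)) i fun y hy => hZ y ?_)
  exact subset_tsupport φ fun h => hy (by simp [h])

/-! ### Discretization of the maximal function -/

/-- The averages of `F` over the cubes of `𝒬` that contain the cell `x`. -/
def cubeAvgs (𝒬 : Finset (GridCube d)) (F : Cell d → ℝ) (x : Cell d) : Set ℝ :=
  {v | ∃ Q ∈ 𝒬, x ∈ Q.cells ∧ v = Q.avg F}

/-- The maximal function of a function on the grid. -/
def gridMax (𝒬 : Finset (GridCube d)) (F : Cell d → ℝ) (x : Cell d) : ℝ :=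
  sSup ({F x} ∪ cubeAvgs 𝒬 F x)

lemma finite_cubeAvgs (𝒬 : Finset (GridCube d)) (F : Cell d → ℝ) (x : Cell d) :
    (cubeAvgs 𝒬 F x).Finite := by
  refine (𝒬.finite_toSet.image fun Q => Q.avg F).subset ?_
  rintro v ⟨Q, hQ, -, rfl⟩
  exact ⟨Q, hQ, rfl⟩

lemma isMaxFun_gridMax (𝒬 : Finset (GridCube d)) (F : Cell d → ℝ) :
    IsMaxFun 𝒬 F (gridMax 𝒬 F) := by
  intro x μ
  rw [gridMax, lt_csSup_iff ((finite_singleton _).union (finite_cubeAvgs 𝒬 F x)).bddAbove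
    ((singleton_nonempty _).mono subset_union_left)]
  constructor
  · rintro ⟨_, rfl | ⟨Q, hQ, hx, rfl⟩, hμ⟩
    · exact Or.inl hμ
    · exact Or.inr ⟨Q, hQ, hx, hμ⟩
  · rintro (hμ | ⟨Q, hQ, hx, hμ⟩)
    · exact ⟨_, Or.inl rfl, hμ⟩
    · exact ⟨_, Or.inr ⟨Q, hQ, hx, rfl⟩, hμ⟩

lemma abs_sSup_sub_sSup_le {S : Set ℝ} (hS : S.Finite) (a b : ℝ) :
    |sSup ({a} ∪ S) - sSup ({b} ∪ S)| ≤ |a - b| := by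
  rcases S.eq_empty_or_nonempty with rfl | hne
  · simp
  · rw [csSup_union bddAbove_singleton (singleton_nonempty a) hS.bddAbove hne,
      csSup_union bddAbove_singleton (singleton_nonempty b) hS.bddAbove hne,
      csSup_singleton, csSup_singleton]
    exact abs_max_sub_max_le_abs _ _ _

lemma measurable_sSup_union_cubeAvgs (𝒬 : Finset (GridCube d)) (F : Cell d → ℝ) :
    Measurable fun p : ℝ × Cell d => sSup ({p.1} ∪ cubeAvgs 𝒬 F p.2) :=
  measurable_from_prod_countable_left fun x => (LipschitzWith.mk_one
    fun a b => abs_sSup_sub_sSup_le (finite_cubeAvgs 𝒬 F x) a b).continuous.measurable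

lemma cubeSet_eq (s : ℕ) (Q : GridCube d) :
    cubeSet s Q = {y : Ed d | ∀ i, y i ∈ Ico ((2 : ℝ) ^ ((Q.scale : ℤ) - s) * Q.index i)
      ((2 : ℝ) ^ ((Q.scale : ℤ) - s) * (Q.index i + 1))} := by
  ext y
  refine GridCube.mem_cells.trans (forall_congr' fun i => ?_)
  rw [GridCube.mem_interval, cellAt_apply, Int.le_floor, Int.floor_lt,
    zpow_sub₀ two_ne_zero, zpow_natCast, zpow_natCast, mem_Ico, div_mul_eq_mul_div,
    div_mul_eq_mul_div, div_le_iff₀ (by positivity), lt_div_iff₀ (by positivity), mul_comm (y i)]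
  push_cast
  rfl

lemma isDyadicCube_cubeSet (s : ℕ) (Q : GridCube d) : IsDyadicCube (cubeSet s Q) :=
  ⟨_, _, cubeSet_eq s Q⟩

lemma eventually_exists_cubeSet_eq {Q : Set (Ed d)} (h : IsDyadicCube Q) :
    ∀ᶠ s in atTop, ∃ R, cubeSet s R = Q := by
  obtain ⟨n, m, rfl⟩ := h
  filter_upwards [eventually_ge_atTop (-n).toNat] with s hs
  refine ⟨⟨(n + s).toNat, m⟩, ?_⟩
  rw [cubeSet_eq, show (((n + s).toNat : ℕ) : ℤ) - s = n by lia]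

lemma cellAt_surjective (s : ℕ) : Function.Surjective (cellAt s : Ed d → Cell d) := fun x =>
  ⟨WithLp.toLp 2 fun i => x i / 2 ^ s, funext fun i => by
    rw [cellAt_apply, PiLp.toLp_apply, mul_div_cancel₀ _ (by positivity), Int.floor_intCast]⟩

lemma cubeSet_subset_cubeSet {s : ℕ} {P Q : GridCube d} :
    cubeSet s P ⊆ cubeSet s Q ↔ P.cells ⊆ Q.cells :=
  (cellAt_surjective s).preimage_subset_preimage_iff.trans Finset.coe_subset

lemma cubeSet_injective (hd : 1 ≤ d) (s : ℕ) :
    Function.Injective (cubeSet s : GridCube d → Set (Ed d)) := by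
  intro P Q h
  have hcells : P.cells = Q.cells :=
    Finset.coe_injective ((cellAt_surjective s).preimage_injective h)
  have hcard := P.card_cells
  rw [hcells, Q.card_cells, pow_left_inj₀ (by positivity) (by positivity) (by lia)] at hcard
  obtain ⟨x, hx⟩ := P.cells_nonempty
  exact GridCube.eq_of_mem_cells hx (hcells ▸ hx) (pow_right_injective₀ two_pos
    one_lt_two.ne' hcard).symm

lemma ae_mem_interior {Q : Set (Ed d)} (h : IsDyadicCube Q) :
    ∀ᵐ y, y ∈ Q → y ∈ interior Q := by
  obtain ⟨n, m, rfl⟩ := h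
  filter_upwards [ae_all_iff.2 fun i => ae_apply_ne i ((2 : ℝ) ^ n * m i)] with y hy hyQ
  refine interior_maximal (t := {y : Ed d | ∀ i, y i ∈ Ioo ((2 : ℝ) ^ n * m i)
    ((2 : ℝ) ^ n * (m i + 1))}) (fun z hz i => Ioo_subset_Ico_self (hz i)) ?_
    fun i => ⟨(hyQ i).1.lt_of_ne' (hy i), (hyQ i).2⟩
  simp only [Set.ofPred_forall]
  exact isOpen_iInter_of_finite fun i => isOpen_Ioo.preimage (by fun_prop)

/-! ### The variation of the maximal function -/

lemma exists_grid_family (hd : 1 ≤ d) (s : ℕ) {𝒬 : Finset (Set (Ed d))}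
    (hs : ∀ Q ∈ 𝒬, ∃ R, cubeSet s R = Q)
    (h𝒬 : ∀ P : Set (Ed d), IsDyadicCube P → P ⊆ (⋃ Q ∈ 𝒬, Q) → (∃ Q ∈ 𝒬, Q ⊆ P) → P ∈ 𝒬) :
    ∃ 𝒬' : Finset (GridCube d), (𝒬' : Set (GridCube d)).OrdConnected ∧
      cubeSet s '' (𝒬' : Set (GridCube d)) = 𝒬 := by
  refine ⟨(𝒬.finite_toSet.preimage (cubeSet_injective hd s).injOn).toFinset, ?_, ?_⟩ <;>
    rw [Finite.coe_toFinset]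
  · refine ⟨fun P hP R hR T hT => ?_⟩
    exact h𝒬 _ (isDyadicCube_cubeSet s T) ((cubeSet_subset_cubeSet.2 hT.2.2).trans
      (subset_biUnion_of_mem (u := fun Q => Q) hR)) ⟨_, hP, cubeSet_subset_cubeSet.2 hT.1.2⟩
  · exact image_preimage_eq_of_subset hs

section Grid

variable {f : Ed d → ℝ} {s : ℕ} {𝒬 : Finset (Set (Ed d))} {𝒬' : Finset (GridCube d)}

lemma finMaxFun_eq (hf : Integrable f) (h : cubeSet s '' (𝒬' : Set (GridCube d)) = 𝒬) (y : Ed d) :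
    finMaxFun 𝒬 f y = sSup ({f y} ∪ cubeAvgs 𝒬' (cellAvg s f) (cellAt s y)) := by
  have havgs : {v : ℝ | ∃ Q ∈ 𝒬, y ∈ Q ∧ v = ⨍ z in Q, f z} =
      cubeAvgs 𝒬' (cellAvg s f) (cellAt s y) := by
    ext v
    simp only [cubeAvgs, ← Finset.mem_coe (s := 𝒬), ← h, exists_mem_image, avg_cellAvg s hf]
    rfl
  rw [finMaxFun, havgs]

lemma abs_finMaxFun_sub_gridMax_le (hf : Integrable f)
    (h : cubeSet s '' (𝒬' : Set (GridCube d)) = 𝒬) (y : Ed d) :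
    |finMaxFun 𝒬 f y - gridMax 𝒬' (cellAvg s f) (cellAt s y)| ≤
      |f y - cellAvg s f (cellAt s y)| := by
  rw [finMaxFun_eq hf h, gridMax]
  exact abs_sSup_sub_sSup_le (finite_cubeAvgs 𝒬' _ _) _ _

lemma aestronglyMeasurable_finMaxFun (hf : Integrable f)
    (h : cubeSet s '' (𝒬' : Set (GridCube d)) = 𝒬) :
    AEStronglyMeasurable (finMaxFun 𝒬 f) volume := by
  rw [funext (finMaxFun_eq hf h)]
  exact ((measurable_sSup_union_cubeAvgs 𝒬' (cellAvg s f)).comp_aemeasurable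
    (hf.aemeasurable.prodMk (measurable_cellAt s).aemeasurable)).aestronglyMeasurable

lemma locallyIntegrable_finMaxFun (hf : Integrable f)
    (h : cubeSet s '' (𝒬' : Set (GridCube d)) = 𝒬) : LocallyIntegrable (finMaxFun 𝒬 f) := by
  have hN := locallyIntegrable_comp_cellAt s (gridMax 𝒬' (cellAvg s f))
  have hg := locallyIntegrable_comp_cellAt s (cellAvg s f)
  have hdiff : LocallyIntegrable (finMaxFun 𝒬 f - fun y =>
      gridMax 𝒬' (cellAvg s f) (cellAt s y)) :=
    (hf.locallyIntegrable.sub hg).mono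
      ((aestronglyMeasurable_finMaxFun hf h).sub hN.aestronglyMeasurable)
      (Eventually.of_forall (abs_finMaxFun_sub_gridMax_le hf h))
  simpa only [sub_add_cancel] using hdiff.add hN

end Grid

lemma ofReal_abs_integral_gridMax_mul_divergence_le {f : Ed d → ℝ} (hf : Integrable f) (s : ℕ)
    {𝒬 : Finset (GridCube d)} (h𝒬 : (𝒬 : Set (GridCube d)).OrdConnected) {Ω : Set (Ed d)}
    (hΩ : ∀ Q ∈ 𝒬, interior (cubeSet s Q) ⊆ Ω) {φ : Ed d → Ed d} (hφ : IsTestField Ω φ)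
    (hbox : ∀ y ∈ tsupport φ, ∀ e : Edge d, shift e.1 e.2 = cellAt s y → edgeBox s e ⊆ Ω) :
    ENNReal.ofReal |∫ y, gridMax 𝒬 (cellAvg s f) (cellAt s y) * divergence φ y| ≤
      ENNReal.ofReal (discreteConst d) * (2 * d) * var Ω f := by
  classical
  have hcells := finite_image_cellAt s hφ.hasCompactSupport.isCompact.isBounded
  let 𝓔 := lowerEdges hcells.toFinset ∪ 𝒬.biUnion GridCube.edges
  have h𝓔 : ∀ e ∈ 𝓔, edgeBox s e ⊆ Ω := fun e he => by
    rcases Finset.mem_union.1 he with he | he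
    · obtain ⟨y, hy, hye⟩ := hcells.mem_toFinset.1 (shift_mem_of_mem_lowerEdges he)
      exact hbox y hy e hye.symm
    · obtain ⟨Q, hQ, he⟩ := Finset.mem_biUnion.1 he
      exact (edgeBox_subset_interior_cubeSet s he).trans (hΩ Q hQ)
  have hdiscrete : edgeVar (lowerEdges hcells.toFinset) (gridMax 𝒬 (cellAvg s f)) ≤
      discreteConst d * edgeVar 𝓔 (cellAvg s f) :=
    (Finset.sum_le_sum_of_subset_of_nonneg Finset.subset_union_left
      fun e _ _ => jump_nonneg _ e).trans
      (edgeVar_le_of_isMaxFun h𝒬 (isMaxFun_gridMax 𝒬 _) fun Q hQ =>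
        (Finset.subset_biUnion_of_mem _ hQ).trans Finset.subset_union_right)
  have hreal : |∫ y, gridMax 𝒬 (cellAvg s f) (cellAt s y) * divergence φ y| ≤
      discreteConst d * (faceArea d s * edgeVar 𝓔 (cellAvg s f)) :=
    (abs_integral_comp_cellAt_mul_divergence_le s _ hφ fun y hy =>
      hcells.mem_toFinset.2 (mem_image_of_mem _ hy)).trans <| by
      rw [mul_left_comm]
      exact mul_le_mul_of_nonneg_left hdiscrete (faceArea_pos d s).le
  calc ENNReal.ofReal |∫ y, gridMax 𝒬 (cellAvg s f) (cellAt s y) * divergence φ y|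
      ≤ ENNReal.ofReal (discreteConst d) *
          ENNReal.ofReal (faceArea d s * edgeVar 𝓔 (cellAvg s f)) := by
        rw [← ENNReal.ofReal_mul (discreteConst_nonneg d)]
        exact ENNReal.ofReal_le_ofReal hreal
    _ ≤ ENNReal.ofReal (discreteConst d) * (2 * d * var Ω f) := by
        gcongr
        exact ofReal_faceArea_mul_edgeVar_le hf s h𝓔
    _ = ENNReal.ofReal (discreteConst d) * (2 * d) * var Ω f := (mul_assoc _ _ _).symm

lemma abs_integral_mul_divergence_sub_le {f g M N : Ed d → ℝ} (hf : LocallyIntegrable f)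
    (hg : LocallyIntegrable g) (hM : LocallyIntegrable M) (hN : LocallyIntegrable N)
    (h : ∀ y, |M y - N y| ≤ |f y - g y|) {φ : Ed d → Ed d} (hφ : ContDiff ℝ 1 φ)
    (hc : HasCompactSupport φ) {B : ℝ} (hB : ∀ y, |divergence φ y| ≤ B) :
    |(∫ y, M y * divergence φ y) - ∫ y, N y * divergence φ y| ≤
      B * ∫ y in tsupport φ, |f y - g y| := by
  have hMφ := integrable_mul_divergence hM hφ hc
  have hNφ := integrable_mul_divergence hN hφ hc
  have hmeas := (isClosed_tsupport φ).measurableSet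
  have hfg : IntegrableOn (fun y => |f y - g y|) (tsupport φ) :=
    ((hf.sub hg).integrableOn_isCompact hc.isCompact).abs
  rw [← integral_sub hMφ hNφ, ← integral_const_mul, ← integral_indicator hmeas]
  refine abs_integral_le_integral_abs.trans (integral_mono (hMφ.sub hNφ).abs
    (IntegrableOn.integrable_indicator (hfg.const_mul B) hmeas) fun y => ?_)
  by_cases hy : y ∈ tsupport φ
  · simp only [indicator_of_mem hy]
    rw [← sub_mul, abs_mul, mul_comm]
    exact mul_le_mul (hB y) (h y) (abs_nonneg _) ((abs_nonneg _).trans (hB y))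
  · simp [indicator_of_notMem hy, divergence_of_notMem_tsupport hy]

lemma ofReal_integral_finMaxFun_mul_divergence_le {f : Ed d → ℝ} (hf : Integrable f) {s : ℕ}
    {𝒬 : Finset (Set (Ed d))} {𝒬' : Finset (GridCube d)}
    (h : cubeSet s '' (𝒬' : Set (GridCube d)) = 𝒬)
    (h𝒬' : (𝒬' : Set (GridCube d)).OrdConnected) {Ω : Set (Ed d)}
    (hint : (⋃ Q ∈ 𝒬, interior Q) ⊆ Ω) {φ : Ed d → Ed d} (hφ : IsTestField Ω φ)
    (hbox : ∀ y ∈ tsupport φ, ∀ e : Edge d, shift e.1 e.2 = cellAt s y → edgeBox s e ⊆ Ω)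
    {B : ℝ} (hB : ∀ y, |divergence φ y| ≤ B) :
    ENNReal.ofReal (∫ y, finMaxFun 𝒬 f y * divergence φ y) ≤
      ENNReal.ofReal (B * ∫ y in tsupport φ, |f y - cellAvg s f (cellAt s y)|) +
        ENNReal.ofReal (discreteConst d) * (2 * d) * var Ω f := by
  have herror := abs_integral_mul_divergence_sub_le hf.locallyIntegrable
    (locallyIntegrable_comp_cellAt s (cellAvg s f)) (locallyIntegrable_finMaxFun hf h)
    (locallyIntegrable_comp_cellAt s (gridMax 𝒬' (cellAvg s f)))
    (abs_finMaxFun_sub_gridMax_le hf h) hφ.contDiff hφ.hasCompactSupport hB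
  have hinterior : ∀ Q ∈ 𝒬', interior (cubeSet s Q) ⊆ Ω := fun Q hQ =>
    (subset_biUnion_of_mem (u := fun Q => interior Q)
      (h.subset (mem_image_of_mem _ hQ))).trans hint
  calc ENNReal.ofReal (∫ y, finMaxFun 𝒬 f y * divergence φ y)
      ≤ ENNReal.ofReal (B * (∫ y in tsupport φ, |f y - cellAvg s f (cellAt s y)|) +
          |∫ y, gridMax 𝒬' (cellAvg s f) (cellAt s y) * divergence φ y|) :=
        ENNReal.ofReal_le_ofReal (by
          linarith [le_abs_self (∫ y, gridMax 𝒬' (cellAvg s f) (cellAt s y) * divergence φ y),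
            (le_abs_self _).trans herror])
    _ ≤ _ := ENNReal.ofReal_add_le.trans (by
        gcongr
        exact ofReal_abs_integral_gridMax_mul_divergence_le hf s h𝒬' hinterior hφ hbox)

lemma var_finMaxFun_le_of_integrable (hd : 1 ≤ d) {𝒬 : Finset (Set (Ed d))}
    (hdy : ∀ Q ∈ 𝒬, IsDyadicCube Q)
    (h𝒬 : ∀ P : Set (Ed d), IsDyadicCube P → P ⊆ (⋃ Q ∈ 𝒬, Q) → (∃ Q ∈ 𝒬, Q ⊆ P) → P ∈ 𝒬)
    {Ω : Set (Ed d)} (hΩ : IsOpen Ω) (hint : (⋃ Q ∈ 𝒬, interior Q) ⊆ Ω)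
    {f : Ed d → ℝ} (hf : Integrable f) :
    var Ω (finMaxFun 𝒬 f) ≤ ENNReal.ofReal (discreteConst d) * (2 * d) * var Ω f := by
  rw [var_eq_iSup Ω (finMaxFun 𝒬 f)]
  refine iSup₂_le fun φ hφ => ?_
  have hK := hφ.hasCompactSupport.isCompact
  obtain ⟨B, hB⟩ := (hasCompactSupport_divergence hφ.hasCompactSupport).exists_bound_of_continuous
    (continuous_divergence hφ.contDiff)
  have hlim : Tendsto (fun s => ENNReal.ofReal (B * ∫ y in tsupport φ,
      |f y - cellAvg s f (cellAt s y)|) + ENNReal.ofReal (discreteConst d) * (2 * d) * var Ω f)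
      atTop (𝓝 (ENNReal.ofReal (discreteConst d) * (2 * d) * var Ω f)) := by
    simpa using (ENNReal.tendsto_ofReal
      ((tendsto_setIntegral_abs_sub_cellAvg hf hK).const_mul B)).add_const
      (ENNReal.ofReal (discreteConst d) * (2 * d) * var Ω f)
  have hgrid : ∀ᶠ s in atTop, ∀ Q ∈ 𝒬, ∃ R, cubeSet s R = Q :=
    (Finset.eventually_all 𝒬).2 fun Q hQ => eventually_exists_cubeSet_eq (hdy Q hQ)
  refine ge_of_tendsto hlim ?_
  filter_upwards [hgrid, eventually_edgeBox_subset hΩ hK hφ.tsupport_subset] with s hs hbox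
  obtain ⟨𝒬', hconnected, himage⟩ := exists_grid_family hd s hs h𝒬
  exact ofReal_integral_finMaxFun_mul_divergence_le hf himage hconnected hint hφ hbox hB

lemma var_congr {Ω : Set (Ed d)} (hΩ : IsOpen Ω) {f g : Ed d → ℝ} (h : EqOn f g Ω) :
    var Ω f = var Ω g :=
  iSup_congr fun φ => iSup_congr fun _ => congrArg ENNReal.ofReal <|
    setIntegral_congr_fun hΩ.measurableSet fun _ hy => congrArg (· * divergence φ _) (h hy)

lemma measurableSet_of_isDyadicCube {Q : Set (Ed d)} (h : IsDyadicCube Q) : MeasurableSet Q := by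
  obtain ⟨s, R, rfl⟩ := (eventually_exists_cubeSet_eq h).exists
  exact measurable_cellAt s R.cells.measurableSet

lemma setAverage_congr_of_eqOn_interior {Q : Set (Ed d)} (hQ : IsDyadicCube Q) {f g : Ed d → ℝ}
    (h : EqOn f g (interior Q)) : ⨍ y in Q, f y = ⨍ y in Q, g y := by
  rw [setAverage_eq, setAverage_eq, setIntegral_congr_ae (measurableSet_of_isDyadicCube hQ)]
  filter_upwards [ae_mem_interior hQ] with y hy hyQ
  exact h (hy hyQ)

lemma finMaxFun_congr {𝒬 : Finset (Set (Ed d))} (hdy : ∀ Q ∈ 𝒬, IsDyadicCube Q)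
    {Ω : Set (Ed d)} (hint : (⋃ Q ∈ 𝒬, interior Q) ⊆ Ω) {f g : Ed d → ℝ} (h : EqOn f g Ω) :
    EqOn (finMaxFun 𝒬 f) (finMaxFun 𝒬 g) Ω := by
  have havg : ∀ Q ∈ 𝒬, ⨍ y in Q, f y = ⨍ y in Q, g y := fun Q hQ =>
    setAverage_congr_of_eqOn_interior (hdy Q hQ)
      (h.mono ((subset_biUnion_of_mem (u := fun Q => interior Q) hQ).trans hint))
  intro y hy
  rw [finMaxFun, finMaxFun, h hy]
  refine congrArg (fun S => sSup ({g y} ∪ S)) (Set.ext fun v => exists_congr fun Q =>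
    and_congr_right fun hQ => ?_)
  rw [havg Q hQ]

end Variation

end DyadicVariation

/-- Finite version of the variation bound: there is `C = C_d < ∞` such that for every
finite, upward-closed (inside its union) family `𝒬` of dyadic cubes, every open `Ω`
containing all interiors of cubes of `𝒬` and every `f ∈ L¹(Ω)`,
`var_Ω (M_𝒬 f) ≤ C · var_Ω f`. -/
theorem variation_of_finite_dyadic_maximal_function (d : ℕ) (hd : 1 ≤ d) :
    ∃ C : ℝ≥0∞, C ≠ ∞ ∧
      ∀ (𝒬 : Finset (Set (Ed d))), (∀ Q ∈ 𝒬, IsDyadicCube Q) →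
        (∀ P : Set (Ed d), IsDyadicCube P → P ⊆ (⋃ Q ∈ 𝒬, Q) →
          (∃ Q ∈ 𝒬, Q ⊆ P) → P ∈ 𝒬) →
        ∀ (Ω : Set (Ed d)), IsOpen Ω → (⋃ Q ∈ 𝒬, interior Q) ⊆ Ω →
          ∀ f : Ed d → ℝ, IntegrableOn f Ω volume →
            var Ω (finMaxFun 𝒬 f) ≤ C * var Ω f := by
  refine ⟨ENNReal.ofReal (DyadicVariation.discreteConst d) * (2 * d),
    ENNReal.mul_ne_top ENNReal.ofReal_ne_top (ENNReal.mul_ne_top (by simp) (by simp)), ?_⟩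
  intro 𝒬 hdy h𝒬 Ω hΩ hint f hf
  have h : EqOn f (Ω.indicator f) Ω := fun y hy => (indicator_of_mem hy f).symm
  rw [DyadicVariation.var_congr hΩ h,
    DyadicVariation.var_congr hΩ (DyadicVariation.finMaxFun_congr hdy hint h)]
  exact DyadicVariation.var_finMaxFun_le_of_integrable hd hdy h𝒬 hΩ hint
    (hf.integrable_indicator hΩ.measurableSet)

end
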